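/- arXiv:1212.3113 — 4 statements merged into one kernel-verified Lean document; each statement's English description precedes it below -/
import Mathlib

section
/- For every integer k ≥ 2 there exists a finite-dimensional Lie algebra f over ℚ of dimension 2^k − 1 which is filiform nilpotent (i.e., has nilpotency class 2^k − 2), has derived length exactly k, and admits a non-singular (invertible) derivation. -/
/-!
The example is the truncated positive part of the Witt algebra: for `n = 2 ^ k - 1` take a basis
`e_1, …, e_n` with `[e_a, e_b] = (b - a) e_{a+b}`, where `e_m = 0` for `m > n`.

* It is graded by positive integers, so `e_a ↦ a e_a` is an invertible derivation (`Witt.der`).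
* Let `F m` be the ideal spanned by the `e_a` with `a ≥ m` (`Witt.fil`). Then `[F a, F b] ≤ F (a+b)`,
  and `[F a, F a] ≤ F (2a+1)` since `[e_a, e_a] = 0`. Starting from `F 1`, this places the `i`-th
  term of the lower central series in `F (i+2)` for `i ≥ 1`, and the `i`-th derived algebra in
  `F (2^(i+1) - 1)`.
* Conversely `[e_1, e_b] = (b-1) e_{b+1}` shows that `e_{i+2}` lies in the `i`-th term of the lower
  central series, and `[e_m, e_{a-m}] = (a - 2m) e_a` for `a ≥ 2m+1` shows inductively that `e_a`
  lies in the `i`-th derived algebra whenever `a ≥ 2^(i+1) - 1`.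

For `n = 2 ^ k - 1` these two bounds give exactly the nilpotency class and the derived length.
-/

/-- Underlying space of the truncated positive Witt algebra of dimension `n`; the coordinate with
index `i : Fin n` is the coefficient of `e_{i+1}`. It is a type synonym so that the Lie bracket does
not compete with the pointwise (zero) one on functions. -/
def Witt (n : ℕ) : Type := Fin n → ℚ

namespace Witt

variable {n : ℕ}

instance : AddCommGroup (Witt n) := inferInstanceAs (AddCommGroup (Fin n → ℚ))
instance : Module ℚ (Witt n) := inferInstanceAs (Module ℚ (Fin n → ℚ))
instance : FiniteDimensional ℚ (Witt n) := inferInstanceAs (FiniteDimensional ℚ (Fin n → ℚ))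

theorem finrank_eq : Module.finrank ℚ (Witt n) = n :=
  Module.finrank_fin_fun ℚ

@[ext] theorem ext {x y : Witt n} (h : ∀ i, x i = y i) : x = y := funext h

@[simp] theorem add_apply (x y : Witt n) (i : Fin n) : (x + y) i = x i + y i := rfl
@[simp] theorem neg_apply (x : Witt n) (i : Fin n) : (-x) i = -x i := rfl
@[simp] theorem sub_apply (x y : Witt n) (i : Fin n) : (x - y) i = x i - y i := rfl
@[simp] theorem smul_apply (c : ℚ) (x : Witt n) (i : Fin n) : (c • x) i = c * x i := rfl
@[simp] theorem zero_apply (i : Fin n) : (0 : Witt n) i = 0 := rfl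

/-- The basis vector `e_m`, which is `0` unless `1 ≤ m ≤ n`. -/
def E (m : ℕ) : Witt n := fun i => if (i : ℕ) + 1 = m then 1 else 0

theorem E_apply (m : ℕ) (i : Fin n) : (E m : Witt n) i = if (i : ℕ) + 1 = m then 1 else 0 := rfl

theorem E_ne_zero {m : ℕ} (h1 : 1 ≤ m) (h2 : m ≤ n) : (E m : Witt n) ≠ 0 := by
  intro h
  have h' := congrFun h ⟨m - 1, by omega⟩
  have : m - 1 + 1 = m := by omega
  simp [E_apply, this] at h'

theorem induct {p : Witt n → Prop} (h0 : p 0) (hadd : ∀ x y, p x → p y → p (x + y))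
    (hsmul : ∀ (c : ℚ) x, p x → p (c • x)) (hE : ∀ a, 1 ≤ a → p (E a)) (x : Witt n) : p x := by
  have hx : x = ∑ i : Fin n, x i • (E ((i : ℕ) + 1) : Witt n) := by
    ext j
    have : (∑ i : Fin n, x i • (E ((i : ℕ) + 1) : Witt n)) j
        = ∑ i : Fin n, (x i • (E ((i : ℕ) + 1) : Witt n)) j :=
      Finset.sum_apply (M := fun _ : Fin n => ℚ) j Finset.univ _
    rw [this, Finset.sum_eq_single j]
    · simp [E_apply]
    · intro i _ hi
      simp [E_apply, Fin.val_inj, hi.symm]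
    · simp
  rw [hx]
  exact Finset.sum_induction _ p hadd h0 fun i _ => hsmul _ _ (hE _ (by omega))

/-- The bracket determined by `[e_a, e_b] = (b - a) e_{a+b}`, in coordinates. -/
def brFun (x y : Witt n) : Witt n := fun l => ∑ i : Fin n, ∑ j : Fin n,
  if (l : ℕ) + 1 = ((i : ℕ) + 1) + ((j : ℕ) + 1) then ((j : ℚ) - i) * x i * y j else 0

theorem brFun_apply (x y : Witt n) (l : Fin n) : brFun x y l = ∑ i : Fin n, ∑ j : Fin n,
    if (l : ℕ) + 1 = ((i : ℕ) + 1) + ((j : ℕ) + 1) then ((j : ℚ) - i) * x i * y j else 0 := rfl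

/-- The bracket as a bilinear map. -/
def br : Witt n →ₗ[ℚ] Witt n →ₗ[ℚ] Witt n :=
  LinearMap.mk₂ ℚ brFun
    (by
      intro x y z; ext l
      simp only [brFun_apply, add_apply, ← Finset.sum_add_distrib]
      refine Finset.sum_congr rfl fun i _ => Finset.sum_congr rfl fun j _ => ?_
      split_ifs <;> ring)
    (by
      intro c x y; ext l
      simp only [brFun_apply, smul_apply, Finset.mul_sum]
      refine Finset.sum_congr rfl fun i _ => Finset.sum_congr rfl fun j _ => ?_
      split_ifs <;> ring)
    (by
      intro x y z; ext l
      simp only [brFun_apply, add_apply, ← Finset.sum_add_distrib]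
      refine Finset.sum_congr rfl fun i _ => Finset.sum_congr rfl fun j _ => ?_
      split_ifs <;> ring)
    (by
      intro c x y; ext l
      simp only [brFun_apply, smul_apply, Finset.mul_sum]
      refine Finset.sum_congr rfl fun i _ => Finset.sum_congr rfl fun j _ => ?_
      split_ifs <;> ring)

theorem br_apply (x y : Witt n) (l : Fin n) : br x y l = ∑ i : Fin n, ∑ j : Fin n,
    if (l : ℕ) + 1 = ((i : ℕ) + 1) + ((j : ℕ) + 1) then ((j : ℚ) - i) * x i * y j else 0 := rfl

theorem br_E {a b : ℕ} (ha : 1 ≤ a) (hb : 1 ≤ b) :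
    br (E a : Witt n) (E b) = ((b : ℚ) - a) • (E (a + b) : Witt n) := by
  ext l
  rw [br_apply, smul_apply, E_apply]
  split_ifs with h
  · have hl := l.2
    rw [Finset.sum_eq_single (⟨a - 1, by omega⟩ : Fin n),
      Finset.sum_eq_single (⟨b - 1, by omega⟩ : Fin n)]
    · have h1 : a - 1 + 1 = a := by omega
      have h2 : b - 1 + 1 = b := by omega
      simp only [E_apply, h1, h2, h, if_true]
      push_cast [Nat.cast_sub ha, Nat.cast_sub hb]
      ring
    · intro j _ hj
      have : (j : ℕ) + 1 ≠ b := fun h' => hj (Fin.ext (by simp; omega))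
      simp [E_apply, this]
    · simp
    · intro i _ hi
      have : (i : ℕ) + 1 ≠ a := fun h' => hi (Fin.ext (by simp; omega))
      simp [E_apply, this]
    · simp
  · rw [mul_zero]
    refine Finset.sum_eq_zero fun i _ => Finset.sum_eq_zero fun j _ => ?_
    simp only [E_apply]
    split_ifs <;> first | omega | simp

theorem br_skew (x y : Witt n) : br x y = -br y x := by
  ext l
  rw [neg_apply, br_apply, br_apply, Finset.sum_comm, ← Finset.sum_neg_distrib]
  refine Finset.sum_congr rfl fun i _ => ?_
  rw [← Finset.sum_neg_distrib]
  refine Finset.sum_congr rfl fun j _ => ?_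
  rw [add_comm ((j : ℕ) + 1)]
  split_ifs <;> ring

theorem br_self (x : Witt n) : br x x = 0 := by
  have h := br_skew x x
  ext l
  have h' := congrFun h l
  rw [neg_apply] at h'
  rw [zero_apply]
  linarith

theorem br_jacobi (x y z : Witt n) : br x (br y z) = br (br x y) z + br y (br x z) := by
  induction x using induct with
  | h0 => simp
  | hadd x x' h h' => simp only [map_add, LinearMap.add_apply, h, h']; abel
  | hsmul c x h => simp only [map_smul, LinearMap.smul_apply, h, smul_add]
  | hE a ha =>
  induction y using induct with
  | h0 => simp
  | hadd x x' h h' => simp only [map_add, LinearMap.add_apply, h, h']; abel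
  | hsmul c x h => simp only [map_smul, LinearMap.smul_apply, h, smul_add]
  | hE b hb =>
  induction z using induct with
  | h0 => simp
  | hadd x x' h h' => simp only [map_add, h, h']; abel
  | hsmul c x h => simp only [map_smul, h, smul_add]
  | hE c hc =>
    rw [br_E hb hc, br_E ha hb, br_E ha hc]
    simp only [map_smul, LinearMap.smul_apply]
    rw [br_E ha (by omega), br_E (by omega) hc, br_E hb (by omega),
      show b + (a + c) = a + (b + c) by ring, show a + b + c = a + (b + c) by ring]
    simp only [smul_smul, ← add_smul]
    congr 1
    push_cast
    ring

instance : LieRing (Witt n) where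
  bracket x y := br x y
  add_lie x y z := by simp
  lie_add x y z := by simp
  lie_self x := br_self x
  leibniz_lie x y z := br_jacobi x y z

instance : LieAlgebra ℚ (Witt n) where
  lie_smul c x y := by change br _ _ = c • br _ _; simp

theorem lie_def (x y : Witt n) : ⁅x, y⁆ = br x y := rfl

/-- If `x` has no terms below degree `a`, `y` none below degree `b`, then `[x, y]` has none below
degree `a + b`. -/
theorem lie_low {a b : ℕ} {x y : Witt n} (hx : ∀ i : Fin n, (i : ℕ) + 1 < a → x i = 0)
    (hy : ∀ i : Fin n, (i : ℕ) + 1 < b → y i = 0) (l : Fin n) (hl : (l : ℕ) + 1 < a + b) :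
    ⁅x, y⁆ l = 0 := by
  rw [lie_def, br_apply]
  refine Finset.sum_eq_zero fun i _ => Finset.sum_eq_zero fun j _ => ?_
  split_ifs with h
  · rcases lt_or_ge ((i : ℕ) + 1) a with h1 | h1
    · simp [hx i h1]
    · simp [hy j (by omega)]
  · rfl

/-- For two elements with no terms below degree `a`, the degree `2a` term of the bracket vanishes
as well, because `[e_a, e_a] = 0`. -/
theorem lie_low' {a : ℕ} {x y : Witt n} (hx : ∀ i : Fin n, (i : ℕ) + 1 < a → x i = 0)
    (hy : ∀ i : Fin n, (i : ℕ) + 1 < a → y i = 0) (l : Fin n) (hl : (l : ℕ) + 1 < 2 * a + 1) :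
    ⁅x, y⁆ l = 0 := by
  rw [lie_def, br_apply]
  refine Finset.sum_eq_zero fun i _ => Finset.sum_eq_zero fun j _ => ?_
  split_ifs with h
  · rcases lt_or_ge ((i : ℕ) + 1) a with h1 | h1
    · simp [hx i h1]
    rcases lt_or_ge ((j : ℕ) + 1) a with h2 | h2
    · simp [hy j h2]
    · have : (i : ℕ) = j := by omega
      simp [this]
  · rfl

/-- The ideal `F m` spanned by the `e_a` with `a ≥ m`. -/
def fil (m : ℕ) : LieIdeal ℚ (Witt n) where
  carrier := {x | ∀ i : Fin n, (i : ℕ) + 1 < m → x i = 0}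
  add_mem' := by
    intro x y hx hy i hi
    simp [hx i hi, hy i hi]
  zero_mem' := fun i _ => rfl
  smul_mem' := by
    intro c x hx i hi
    simp [hx i hi]
  lie_mem := by
    intro x y hy i hi
    exact lie_low (a := 0) (b := m) (fun _ h => absurd h (by omega)) hy i (by omega)

theorem mem_fil {m : ℕ} {x : Witt n} :
    x ∈ (fil m : LieIdeal ℚ (Witt n)) ↔ ∀ i : Fin n, (i : ℕ) + 1 < m → x i = 0 := Iff.rfl

theorem mem_fil_one (x : Witt n) : x ∈ (fil 1 : LieIdeal ℚ (Witt n)) :=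
  fun _ h => absurd h (by omega)

theorem fil_eq_bot {m : ℕ} (h : n < m) : (fil m : LieIdeal ℚ (Witt n)) = ⊥ := by
  rw [eq_bot_iff]
  intro x hx
  rw [LieSubmodule.mem_bot]
  ext i
  exact hx i (by omega)

theorem lcs_le (i : ℕ) :
    LieModule.lowerCentralSeries ℚ (Witt n) (Witt n) (i + 1) ≤ fil (i + 3) := by
  induction i with
  | zero =>
    rw [LieModule.lowerCentralSeries_succ, LieSubmodule.lie_le_iff]
    intro x _ y _
    exact lie_low' (mem_fil_one x) (mem_fil_one y)
  | succ i ih =>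
    rw [LieModule.lowerCentralSeries_succ, LieSubmodule.lie_le_iff]
    intro x _ y hy l hl
    exact lie_low (mem_fil_one x) (ih hy) l (by omega)

theorem E_mem_lcs (i : ℕ) :
    (E (i + 2) : Witt n) ∈ LieModule.lowerCentralSeries ℚ (Witt n) (Witt n) i := by
  induction i with
  | zero => simp
  | succ i ih =>
    have h : (E (i + 1 + 2) : Witt n) = ((i : ℚ) + 1)⁻¹ • ⁅(E 1 : Witt n), (E (i + 2) : Witt n)⁆ := by
      rw [lie_def, br_E le_rfl (by omega), smul_smul, show 1 + (i + 2) = i + 1 + 2 by ring]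
      have : ((i : ℚ) + 1)⁻¹ * (((i + 2 : ℕ) : ℚ) - (1 : ℕ)) = 1 := by
        have : (i : ℚ) + 1 ≠ 0 := by positivity
        push_cast
        field_simp
        ring
      rw [this, one_smul]
    rw [h, LieModule.lowerCentralSeries_succ]
    exact Submodule.smul_mem (LieSubmodule.toSubmodule _) _
      (LieSubmodule.lie_mem_lie (LieSubmodule.mem_top _) ih)

theorem derived_le (i : ℕ) :
    LieAlgebra.derivedSeries ℚ (Witt n) i ≤ fil (2 ^ (i + 1) - 1) := by
  induction i with
  | zero => exact fun x _ => mem_fil_one x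
  | succ i ih =>
    rw [LieAlgebra.derivedSeries_def, LieAlgebra.derivedSeriesOfIdeal_succ,
      LieSubmodule.lie_le_iff]
    intro x hx y hy l hl
    refine lie_low' (ih hx) (ih hy) l ?_
    rw [pow_succ _ (i + 1)] at hl
    omega

theorem E_mem_derived (i : ℕ) : ∀ a, 2 ^ (i + 1) - 1 ≤ a →
    (E a : Witt n) ∈ LieAlgebra.derivedSeries ℚ (Witt n) i := by
  induction i with
  | zero => intro a _; simp
  | succ i ih =>
    intro a ha
    obtain ⟨m, hm⟩ : ∃ m, m = 2 ^ (i + 1) - 1 := ⟨_, rfl⟩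
    have hpos : 2 ≤ 2 ^ (i + 1) := by
      rw [pow_succ]
      have := Nat.one_le_two_pow (n := i)
      omega
    rw [pow_succ _ (i + 1)] at ha
    obtain ⟨c, rfl⟩ : ∃ c, a = m + (m + (c + 1)) := ⟨a - 2 * m - 1, by omega⟩
    have h : (E (m + (m + (c + 1))) : Witt n)
        = ((c : ℚ) + 1)⁻¹ • ⁅(E m : Witt n), (E (m + (c + 1)) : Witt n)⁆ := by
      rw [lie_def, br_E (by omega) (by omega), smul_smul]
      have : ((c : ℚ) + 1)⁻¹ * (((m + (c + 1) : ℕ) : ℚ) - m) = 1 := by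
        have : (c : ℚ) + 1 ≠ 0 := by positivity
        push_cast
        field_simp
        ring
      rw [this, one_smul]
    rw [h, LieAlgebra.derivedSeries_def, LieAlgebra.derivedSeriesOfIdeal_succ]
    exact Submodule.smul_mem (LieSubmodule.toSubmodule _) _
      (LieSubmodule.lie_mem_lie (ih m (by omega)) (ih _ (by omega)))

/-- The element with prescribed coordinates. -/
def mk (f : Fin n → ℚ) : Witt n := f

@[simp] theorem mk_apply (f : Fin n → ℚ) (i : Fin n) : mk f i = f i := rfl

/-- The degree derivation `e_a ↦ a e_a`. -/
def der : LieDerivation ℚ (Witt n) (Witt n) where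
  toFun x := mk fun l => ((l : ℚ) + 1) * x l
  map_add' x y := by ext l; simp only [mk_apply, add_apply]; ring
  map_smul' c x := by ext l; simp only [mk_apply, smul_apply, RingHom.id_apply]; ring
  leibniz' x y := by
    rw [← lie_skew y, sub_neg_eq_add]
    ext l
    simp only [LinearMap.coe_mk, AddHom.coe_mk, mk_apply, add_apply, lie_def, br_apply,
      Finset.mul_sum, ← Finset.sum_add_distrib]
    refine Finset.sum_congr rfl fun i _ => Finset.sum_congr rfl fun j _ => ?_
    split_ifs with h
    · have : (l : ℚ) + 1 = (i + 1) + (j + 1) := by exact_mod_cast h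
      rw [this]
      ring
    · ring

theorem der_apply (x : Witt n) (l : Fin n) : der x l = ((l : ℚ) + 1) * x l := rfl

theorem der_bijective : Function.Bijective (der : LieDerivation ℚ (Witt n) (Witt n)) := by
  have hne : ∀ l : Fin n, (l : ℚ) + 1 ≠ 0 := fun l => by positivity
  constructor
  · intro x y h
    ext l
    have h' := congrFun h l
    rw [der_apply, der_apply] at h'
    exact mul_left_cancel₀ (hne l) h'
  · intro y
    refine ⟨mk fun l => ((l : ℚ) + 1)⁻¹ * y l, ?_⟩
    ext l
    rw [der_apply, mk_apply, mul_inv_cancel_left₀ (hne l)]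

end Witt

/-- For every `k ≥ 2` there exists a Lie algebra over `ℚ` of dimension `2^k - 1`
which is filiform nilpotent (nilpotency class `2^k - 2`), has derived length exactly `k`,
and admits a non-singular (invertible) derivation. -/
theorem stmt_1 (k : ℕ) (hk : 2 ≤ k) :
    ∃ (f : Type) (_ : LieRing f) (_ : LieAlgebra ℚ f),
      FiniteDimensional ℚ f ∧
      Module.finrank ℚ f = 2 ^ k - 1 ∧
      LieModule.lowerCentralSeries ℚ f f (2 ^ k - 2) = ⊥ ∧
      LieModule.lowerCentralSeries ℚ f f (2 ^ k - 3) ≠ ⊥ ∧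
      LieAlgebra.derivedSeries ℚ f k = ⊥ ∧
      LieAlgebra.derivedSeries ℚ f (k - 1) ≠ ⊥ ∧
      ∃ D : LieDerivation ℚ f f, Function.Bijective D := by
  have h4 : 4 ≤ 2 ^ k := Nat.pow_le_pow_right (n := 2) (by norm_num) hk
  have hE : (Witt.E (2 ^ k - 1) : Witt (2 ^ k - 1)) ≠ 0 := Witt.E_ne_zero (by omega) le_rfl
  refine ⟨Witt (2 ^ k - 1), inferInstance, inferInstance, inferInstance, Witt.finrank_eq,
    ?_, ?_, ?_, ?_, Witt.der, Witt.der_bijective⟩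
  · have h := Witt.lcs_le (n := 2 ^ k - 1) (2 ^ k - 3)
    rw [Witt.fil_eq_bot (by omega), show 2 ^ k - 3 + 1 = 2 ^ k - 2 by omega] at h
    exact le_bot_iff.mp h
  · intro h
    have h' := Witt.E_mem_lcs (n := 2 ^ k - 1) (2 ^ k - 3)
    rw [h, LieSubmodule.mem_bot, show 2 ^ k - 3 + 2 = 2 ^ k - 1 by omega] at h'
    exact hE h'
  · have h := Witt.derived_le (n := 2 ^ k - 1) k
    rw [Witt.fil_eq_bot (by rw [pow_succ]; omega)] at h
    exact le_bot_iff.mp h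
  · intro h
    have h' := Witt.E_mem_derived (n := 2 ^ k - 1) (k - 1) (2 ^ k - 1)
      (by rw [show k - 1 + 1 = k by omega])
    rw [h, LieSubmodule.mem_bot] at h'
    exact hE h'
end

section
/- Let f be a filiform nilpotent Lie algebra of dimension n ≤ 14 over a field K of characteristic zero. Then the derived length of f is at most 3, i.e., f^{(3)} = 0. -/
/-!
Write `G k` for the `k`-th term of the lower central series, counted from `G 1 = L`, so that
`⁅G i, G j⁆ ⊆ G (i + j)`. In a filiform algebra `G k / G (k + 1)` is a line for `2 ≤ k < n`, and
for a generic `x` the map `ad x` carries each of these lines onto the next. This gives Vergne's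
adapted sequence `u 1, u 2 = ⁅x, u 1⁆, …`, with `u k` spanning `G k` modulo `G (k + 1)` and
`⁅u 1, u 2⁆ ∈ G 4` (`exists_isAdapted`).

The Leibniz rule for `x`, antisymmetry and one Jacobi identity force
`⁅u i, u j⁆ ∈ G (i + j + 1)` unless `i + j = n - 1` (`graded_constants_eq_zero`, `lie_u_mem`). Since
`G p` is spanned by `u p` and `u (p + 1)` modulo `G (p + 2)`, the bracket of `G p` with itself is
governed by `⁅u p, u (p + 1)⁆` (`lie_self_mem`). Hence the second derived algebra `⁅G 2, G 2⁆` lies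
in `G 5`, and in `G 6` once `n ≥ 7`; the third lies in `⁅G 5, G 5⁆ ⊆ G 11`, respectively in
`⁅G 6, G 6⁆ ⊆ G 13`, which settles `n ≤ 13`.

For `n = 14` the only possible obstruction is `⁅u 6, u 7⁆ = α u 13` with `α ≠ 0`. Let `C i j` be the
coefficient of `u (i + j + 1)` in `⁅u i, u j⁆`. The brackets `⁅u i, u j⁆` with `i + j = 13` are
`± α u 13`, so the Jacobi identity for `u 2, u 3, u 7` is a linear relation among the `C i j`.
Together with the quadratic Jacobi relations of lower degree it yields `C 2 3 = 0`
(`C_two_three_eq_zero`). Then the second derived algebra lies in `G 7`, and `⁅G 7, G 7⁆ ⊆ G 14 = 0`.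
-/

namespace Filiform

/-! ### Structure constants of the graded algebra -/

/-- Let `D i j` be the structure constants of degree `0` of a graded algebra with basis `u 1, u 2, …`
on which an element `x` of degree one acts as the shift (`hrec` is then the Leibniz rule for `x`,
and `hjac` the Jacobi identity for `u 1, u 2, u k` when `⁅u 1, u 2⁆ = 0`). Then `D i j` can be
non-zero only in the top degree. By induction on the total degree `s`, the `D i j` with `i + j = s`
alternate in sign, so they vanish for even `s` by antisymmetry. For `s = 2 m + 1` the recursion and
antisymmetry in degree `s + 1` give `D 1 s = m * D 1 (s - 1)`, and the Jacobi identity makes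
`D 1 s * D 1 (s - 1)` zero. -/
theorem graded_constants_eq_zero {K : Type*} [Field K] [CharZero K] (n : ℕ) (D : ℕ → ℕ → K)
    (hanti : ∀ i j, 1 ≤ i → 1 ≤ j → i + j < n → D i j = - D j i)
    (hrec : ∀ i j, 1 ≤ i → 1 ≤ j → i + j + 1 < n → D i j = D (i + 1) j + D i (j + 1))
    (h12 : D 1 2 = 0)
    (hjac : ∀ k, 1 ≤ k → k + 3 < n → D 2 k * D 1 (k + 2) = D 1 k * D 2 (k + 1)) :
    ∀ s i j, 1 ≤ i → 1 ≤ j → i + j = s → s + 1 < n → D i j = 0 := by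
  have hdiag : ∀ m, 1 ≤ m → m + m < n → D m m = 0 := fun m h1 h2 =>
    self_eq_neg.mp (hanti m m h1 h1 h2)
  intro s
  induction s using Nat.strong_induction_on with
  | _ s ih =>
  intro i₀ j₀ hi₀ hj₀ hs₀ hsn
  have alt : ∀ i, 1 ≤ i → ∀ j, 1 ≤ j → i + j = s → D i j = (-1) ^ (i + 1) * D 1 (s - 1) := by
    intro i hi
    induction i, hi using Nat.le_induction with
    | base =>
      intro j hj h
      have : j = s - 1 := by omega
      subst this; norm_num
    | succ i hi ih2 =>
      intro j hj h
      have h0 := ih (i + j) (by omega) i j hi hj rfl (by omega)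
      have h1 := hrec i j hi hj (by omega)
      have h2 := ih2 (j + 1) (by omega) (by omega)
      rw [h0, h2] at h1
      rw [pow_succ]
      linear_combination -h1
  suffices hδ : D 1 (s - 1) = 0 by rw [alt i₀ hi₀ j₀ hj₀ hs₀, hδ, mul_zero]
  rcases Nat.even_or_odd' s with ⟨m, hm | hm⟩
  · have h := alt m (by omega) m (by omega) (by omega)
    rw [hdiag m (by omega) (by omega)] at h
    exact (mul_eq_zero.mp h.symm).resolve_left (pow_ne_zero _ (by norm_num))
  · by_cases hm1 : m = 1
    · subst hm1; subst hm; simpa using h12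
    have next : ∀ i, 1 ≤ i → ∀ j, 1 ≤ j → i + j = s + 1 →
        D i j = (-1) ^ (i + 1) * (D 1 s - (i - 1) * D 1 (s - 1)) := by
      intro i hi
      induction i, hi using Nat.le_induction with
      | base =>
        intro j hj h
        have : j = s := by omega
        subst this; norm_num
      | succ i hi ih2 =>
        intro j hj h
        have h0 := alt i hi j hj (by omega)
        have h1 := hrec i j hi hj (by omega)
        have h2 := ih2 (j + 1) (by omega) (by omega)
        rw [h0, h2] at h1
        rw [pow_succ]
        push_cast
        linear_combination -h1
    have h := next (m + 1) (by omega) (m + 1) (by omega) (by omega)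
    rw [hdiag (m + 1) (by omega) (by omega)] at h
    have h' := (mul_eq_zero.mp h.symm).resolve_left (pow_ne_zero _ (by norm_num))
    have hj := hjac (s - 2) (by omega) (by omega)
    rw [ih (s - 1) (by omega) 1 (s - 2) le_rfl (by omega) (by omega) (by omega),
      alt 2 (by omega) (s - 2) (by omega) (by omega), show s - 2 + 2 = s by omega] at hj
    have hm0 : (m : K) ≠ 0 := Nat.cast_ne_zero.mpr (by omega)
    push_cast at h'
    have h3 : (m : K) * (D 1 (s - 1) * D 1 (s - 1)) = 0 := by
      linear_combination -hj - D 1 (s - 1) * h'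
    simpa [hm0] using h3

/-- Structure constants of degree `1` in dimension `14`: the linear relations `hlin` coming from a
non-zero bracket in the top degree force `C 2 3 = 0`. All constants are expressed through
`p = C 1 2`, `q = C 2 3`, `r = C 3 4`, `t = C 4 5`. The hypothesis `hlin` says `t = -2 r`; the
Jacobi identity for `(2, 3, 4)` becomes `r (3 q + 5 r) = 0`, and those for `(1, 2, 3)` and
`(1, 3, 4)` then leave only `q = 0`, as `78 ≠ 0`. -/
theorem C_two_three_eq_zero {K : Type*} [Field K] [CharZero K] (C : ℕ → ℕ → K)
    (hanti : ∀ i j, 1 ≤ i → 1 ≤ j → i + j + 1 < 14 → C i j = - C j i)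
    (hrec : ∀ i j, 1 ≤ i → 1 ≤ j → i + j + 2 < 14 → C i j = C (i + 1) j + C i (j + 1))
    (hjac : ∀ i j k, 1 ≤ i → 1 ≤ j → 1 ≤ k → i + j + k + 3 < 14 →
      C i j * C (i + j + 1) k + C j k * C (j + k + 1) i + C k i * C (k + i + 1) j = 0)
    (hlin : C 2 3 - C 3 7 - C 2 7 = 0) : C 2 3 = 0 := by
  have hdiag : ∀ m, 1 ≤ m → m + m + 1 < 14 → C m m = 0 := fun m h1 h2 =>
    self_eq_neg.mp (hanti m m h1 h1 h2)
  have R : ∀ (i j : ℕ) (_ : 1 ≤ i ∧ 1 ≤ j ∧ i + j + 2 < 14 := by decide),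
      C i (j + 1) = C i j - C (i + 1) j :=
    fun i j h => eq_sub_of_add_eq' (hrec i j h.1 h.2.1 h.2.2).symm
  have N : ∀ (i j : ℕ) (_ : 1 ≤ i ∧ 1 ≤ j ∧ i + j + 1 < 14 := by decide), C i j = - C j i :=
    fun i j h => hanti i j h.1 h.2.1 h.2.2
  have c35 : C 3 5 = C 3 4 := by linear_combination R 3 4 - hdiag 4 (by decide) (by decide)
  have c24 : C 2 4 = C 2 3 := by linear_combination R 2 3 - hdiag 3 (by decide) (by decide)
  have c13 : C 1 3 = C 1 2 := by linear_combination R 1 2 - hdiag 2 (by decide) (by decide)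
  have c46 : C 4 6 = C 4 5 := by linear_combination R 4 5 - hdiag 5 (by decide) (by decide)
  have c36 : C 3 6 = C 3 4 - C 4 5 := by linear_combination R 3 5 + c35
  have c37 : C 3 7 = C 3 4 - 2 * C 4 5 := by linear_combination R 3 6 + c36 - c46
  have c25 : C 2 5 = C 2 3 - C 3 4 := by linear_combination R 2 4 + c24
  have c26 : C 2 6 = C 2 3 - 2 * C 3 4 := by linear_combination R 2 5 + c25 - c35
  have c27 : C 2 7 = C 2 3 - 3 * C 3 4 + C 4 5 := by linear_combination R 2 6 + c26 - c36
  have c28 : C 2 8 = C 2 3 - 4 * C 3 4 + 3 * C 4 5 := by linear_combination R 2 7 + c27 - c37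
  have c14 : C 1 4 = C 1 2 - C 2 3 := by linear_combination R 1 3 + c13
  have c15 : C 1 5 = C 1 2 - 2 * C 2 3 := by linear_combination R 1 4 + c14 - c24
  have c16 : C 1 6 = C 1 2 - 3 * C 2 3 + C 3 4 := by linear_combination R 1 5 + c15 - c25
  have c17 : C 1 7 = C 1 2 - 4 * C 2 3 + 3 * C 3 4 := by linear_combination R 1 6 + c16 - c26
  have c18 : C 1 8 = C 1 2 - 5 * C 2 3 + 6 * C 3 4 - C 4 5 := by
    linear_combination R 1 7 + c17 - c27
  have J123 := hjac 1 2 3 (by decide) (by decide) (by decide) (by decide)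
  have J234 := hjac 2 3 4 (by decide) (by decide) (by decide) (by decide)
  have J134 := hjac 1 3 4 (by decide) (by decide) (by decide) (by decide)
  norm_num only [N 4 3, N 6 1, N 3 1, N 5 2, N 6 4, N 8 2, N 4 2, N 7 3, N 5 4, N 8 1, N 4 1, N 6 3,
    c13, c14, c16, c18, c24, c25, c28, c36, c37, c46] at J123 J234 J134
  have ht : C 4 5 = -2 * C 3 4 := by
    rw [c37, c27] at hlin
    linear_combination hlin
  rw [ht] at J234 J134
  generalize C 1 2 = p at *
  generalize C 2 3 = q at *
  generalize C 3 4 = r at *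
  have h1 : r * (3 * q + 5 * r) = 0 := by linear_combination J234 / 2
  have h2 : 3 * q ^ 2 - q * r - 2 * p * r = 0 := by linear_combination J123
  have h3 : 4 * p * r + 2 * q * r - 8 * r ^ 2 = 0 := by linear_combination J134
  rcases mul_eq_zero.mp h1 with h | h
  · subst h
    simpa using h2
  · have hr : r = -(3 / 5) * q := by linear_combination h / 5
    subst hr
    have h4 : q ^ 2 = 0 := by linear_combination (2 * h2 + h3) * (25 / 78)
    simpa using h4

/-! ### Adapted sequences -/

/-- An adapted sequence of a filiform Lie algebra `L` of dimension `n`: a descending filtration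
`G 1 ⊇ G 2 ⊇ …` by ideals, an element `x` and vectors `u 1, u 2, …` with `⁅x, u k⁆ = u (k + 1)`,
such that `u k` spans `G k` modulo `G (k + 1)` for `k ≥ 2`, is non-zero there for `2 ≤ k < n`, and
`⁅u 1, u 2⁆ ∈ G 4`. The indexing is such that `⁅G i, G j⁆ ⊆ G (i + j)`, i.e. `G k` is the term
`k - 1` of the lower central series; values at index `0` play no role. -/
structure IsAdapted {K L : Type*} [Field K] [LieRing L] [LieAlgebra K L] (n : ℕ)
    (G : ℕ → LieSubmodule K L L) (x : L) (u : ℕ → L) : Prop where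
  anti : Antitone G
  lie_mem : ∀ {i j : ℕ} {a b : L}, a ∈ G i → b ∈ G j → ⁅a, b⁆ ∈ G (i + j)
  x_mem : x ∈ G 1
  u_mem : ∀ k, 1 ≤ k → u k ∈ G k
  lie_u : ∀ k, 1 ≤ k → ⁅x, u k⁆ = u (k + 1)
  span : ∀ k, 2 ≤ k → ∀ a ∈ G k, ∃ t : K, a - t • u k ∈ G (k + 1)
  indep : ∀ k, 2 ≤ k → k < n → u k ∉ G (k + 1)
  bot : G n = ⊥
  lie_u_one_two : ⁅u 1, u 2⁆ ∈ G 4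

namespace IsAdapted

variable {K L : Type*} [Field K] [LieRing L] [LieAlgebra K L] {n : ℕ}
  {G : ℕ → LieSubmodule K L L} {x : L} {u : ℕ → L}

theorem coeff_eq_zero (h : IsAdapted n G x u) {k : ℕ} (hk : 2 ≤ k) (hkn : k < n) {t : K}
    (ht : t • u k ∈ G (k + 1)) : t = 0 := by
  by_contra h0
  apply h.indep k hk hkn
  simpa [smul_smul, h0] using (G (k + 1)).smul_mem t⁻¹ ht

/-- The bracket of `G p` with itself, computed modulo the leading terms. -/
theorem lie_self_mem (h : IsAdapted n G x u) {p : ℕ} (hp : 2 ≤ p) (H : LieSubmodule K L L)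
    (hH : G (2 * p + 3) ≤ H) (hu : ∀ b ∈ G (p + 1), ⁅u p, b⁆ ∈ H) {a b : L} (ha : a ∈ G p)
    (hb : b ∈ G p) : ⁅a, b⁆ ∈ H := by
  obtain ⟨s, hs⟩ := h.span p hp a ha
  obtain ⟨t, ht⟩ := h.span p hp b hb
  set a' := a - s • u p with ha'
  set b' := b - t • u p with hb'
  obtain ⟨s', hs'⟩ := h.span (p + 1) (by omega) a' hs
  obtain ⟨t', ht'⟩ := h.span (p + 1) (by omega) b' ht
  set a'' := a' - s' • u (p + 1) with ha''
  set b'' := b' - t' • u (p + 1) with hb''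
  have hab : ⁅a', b'⁆ ∈ G (2 * p + 3) := by
    have e : ⁅a', b'⁆ = s' • ⁅u (p + 1), b''⁆ + ⁅a'', b'⁆ := by
      have : b' = b'' + t' • u (p + 1) := by rw [hb'']; abel
      have h2 : a' = a'' + s' • u (p + 1) := by rw [ha'']; abel
      rw [h2, this]
      simp only [lie_add, add_lie, lie_smul, smul_lie, lie_self, smul_zero, add_zero]
      abel
    rw [e]
    refine add_mem ((G _).smul_mem _ (h.anti ?_ (h.lie_mem (h.u_mem (p + 1) (by omega)) ht')))
      (h.anti ?_ (h.lie_mem hs' ht)) <;> omega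
  have e : ⁅a, b⁆ = s • ⁅u p, b'⁆ - t • ⁅u p, a'⁆ + ⁅a', b'⁆ := by
    have h1 : b = b' + t • u p := by rw [hb']; abel
    have h2 : a = a' + s • u p := by rw [ha']; abel
    rw [h2, h1]
    simp only [lie_add, add_lie, lie_smul, smul_lie, lie_self, smul_zero, add_zero,
      ← lie_skew a' (u p), smul_neg]
    abel
  rw [e]
  exact add_mem (sub_mem (H.smul_mem _ (hu _ ht)) (H.smul_mem _ (hu _ hs))) (hH hab)

/-- The bracket of `G p` with itself lies one step deeper than the general `G (2 * p)`. -/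
theorem lie_self_mem_succ (h : IsAdapted n G x u) {p : ℕ} (hp : 2 ≤ p) {a b : L} (ha : a ∈ G p)
    (hb : b ∈ G p) : ⁅a, b⁆ ∈ G (2 * p + 1) :=
  h.lie_self_mem hp _ (h.anti (by omega))
    (fun _ hb => h.anti (by omega) (h.lie_mem (h.u_mem p (by omega)) hb)) ha hb

/-- An improvement of `h.lie_mem` by one degree: the structure constants of degree `0` vanish
below the top degree, by `graded_constants_eq_zero`. -/
theorem lie_u_mem [CharZero K] (h : IsAdapted n G x u) {i j : ℕ} (hi : 1 ≤ i) (hj : 1 ≤ j)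
    (hij : i + j + 1 < n) : ⁅u i, u j⁆ ∈ G (i + j + 1) := by
  have hex : ∀ i j, ∃ t : K, 1 ≤ i → 1 ≤ j → ⁅u i, u j⁆ - t • u (i + j) ∈ G (i + j + 1) := by
    intro i j
    by_cases hi : 1 ≤ i
    · by_cases hj : 1 ≤ j
      · obtain ⟨t, ht⟩ := h.span (i + j) (by omega) _ (h.lie_mem (h.u_mem i hi) (h.u_mem j hj))
        exact ⟨t, fun _ _ => ht⟩
      · exact ⟨0, fun _ h => absurd h hj⟩
    · exact ⟨0, fun h => absurd h hi⟩
  choose D hD using hex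
  suffices D i j = 0 by simpa [this] using hD i j hi hj
  refine graded_constants_eq_zero n D ?_ ?_ ?_ ?_ (i + j) i j hi hj rfl hij
  · intro i j hi hj hn
    have h1 := hD i j hi hj
    have h2 := hD j i hj hi
    rw [add_comm j i, ← lie_skew] at h2
    apply eq_neg_of_add_eq_zero_left
    apply h.coeff_eq_zero (k := i + j) (by omega) hn
    convert neg_mem (add_mem h1 h2) using 1
    module
  · intro i j hi hj hn
    have h1 := h.lie_mem h.x_mem (hD i j hi hj)
    have h2 := hD (i + 1) j (by omega) hj
    have h3 := hD i (j + 1) hi (by omega)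
    rw [lie_sub, lie_smul, leibniz_lie, h.lie_u i hi, h.lie_u j hj, h.lie_u _ (by omega),
      show 1 + (i + j + 1) = i + j + 2 by omega] at h1
    rw [show i + 1 + j = i + j + 1 by omega] at h2
    rw [show i + (j + 1) = i + j + 1 by omega] at h3
    rw [← sub_eq_zero]
    apply h.coeff_eq_zero (k := i + j + 1) (by omega) hn
    convert sub_mem (add_mem h2 h3) h1 using 1
    module
  · apply h.coeff_eq_zero (k := 3) (by omega) (by omega)
    convert sub_mem h.lie_u_one_two (hD 1 2 le_rfl (by omega)) using 1
    module
  · intro k hk hn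
    have h1 := h.lie_mem h.lie_u_one_two (h.u_mem k hk)
    have h2 := h.lie_mem (h.u_mem 1 le_rfl) (hD 2 k (by omega) hk)
    have h3 := h.lie_mem (h.u_mem 2 (by omega)) (hD 1 k le_rfl hk)
    have h4 := (G _).smul_mem (D 2 k) (hD 1 (2 + k) le_rfl (by omega))
    have h5 := (G _).smul_mem (D 1 k) (hD 2 (1 + k) (by omega) (by omega))
    rw [lie_lie] at h1
    rw [lie_sub, lie_smul] at h2 h3
    rw [show 4 + k = k + 3 + 1 by omega] at h1
    rw [show 1 + (2 + k + 1) = k + 3 + 1 by omega] at h2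
    rw [show 2 + (1 + k + 1) = k + 3 + 1 by omega] at h3
    rw [show 1 + (2 + k) = k + 3 by omega, add_comm 2 k] at h4
    rw [show 2 + (1 + k) = k + 3 by omega, add_comm 1 k] at h5
    rw [add_comm 2 k] at h2
    rw [add_comm 1 k] at h3
    rw [← sub_eq_zero]
    apply h.coeff_eq_zero (k := k + 3) (by omega) hn
    convert add_mem (sub_mem (sub_mem (sub_mem h1 h2) h4) (neg_mem h3)) h5 using 1
    module

theorem lie_mem_u_mem [CharZero K] (h : IsAdapted n G x u) {p k : ℕ} (hp : 2 ≤ p) (hk : 1 ≤ k)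
    (hpk : p + k + 1 < n) {a : L} (ha : a ∈ G p) : ⁅a, u k⁆ ∈ G (p + k + 1) := by
  obtain ⟨t, ht⟩ := h.span p hp a ha
  have h1 := h.lie_mem ht (h.u_mem k hk)
  have h2 := (G _).smul_mem t (h.lie_u_mem (by omega) hk hpk : ⁅u p, u k⁆ ∈ _)
  rw [show p + 1 + k = p + k + 1 by omega, sub_lie, smul_lie] at h1
  simpa using add_mem h1 h2

/-- In dimension `14`, the non-zero bracket `⁅u 6, u 7⁆` possible in the top degree and a non-zero
component of `⁅u 2, u 3⁆` along `u 6` exclude each other. The structure constants of degree `1`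
satisfy the hypotheses of `C_two_three_eq_zero`, the linear one being the Jacobi identity for
`u 2, u 3, u 7`, whose total degree is the top one. -/
theorem lie_eq_zero_or [CharZero K] (h : IsAdapted 14 G x u) :
    ⁅u 6, u 7⁆ = 0 ∨ ⁅u 2, u 3⁆ ∈ G 7 := by
  have hex : ∀ i j, ∃ t : K, 1 ≤ i → 1 ≤ j → i + j + 1 < 14 →
      ⁅u i, u j⁆ - t • u (i + j + 1) ∈ G (i + j + 2) := by
    intro i j
    by_cases hij : 1 ≤ i ∧ 1 ≤ j ∧ i + j + 1 < 14
    · obtain ⟨t, ht⟩ := h.span (i + j + 1) (by omega) _ (h.lie_u_mem hij.1 hij.2.1 hij.2.2)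
      exact ⟨t, fun _ _ _ => ht⟩
    · exact ⟨0, fun h1 h2 h3 => absurd ⟨h1, h2, h3⟩ hij⟩
  choose C hC using hex
  have hzero : ∀ {a : L}, a ∈ G 14 → a = 0 := by
    intro a ha
    simpa [h.bot] using ha
  -- The brackets of top degree alternate in sign.
  have hshift : ∀ i j, 1 ≤ i → 1 ≤ j → i + j = 12 → ⁅u (i + 1), u j⁆ = - ⁅u i, u (j + 1)⁆ := by
    intro i j hi hj hij
    have h1 := h.lie_mem h.x_mem (h.lie_u_mem hi hj (by omega))
    rw [show 1 + (i + j + 1) = 14 by omega, leibniz_lie, h.lie_u i hi, h.lie_u j hj] at h1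
    exact eq_neg_of_add_eq_zero_left (hzero h1)
  by_cases hv : ⁅u 6, u 7⁆ = 0
  · exact Or.inl hv
  right
  suffices C 2 3 = 0 by simpa [this] using hC 2 3 (by omega) (by omega) (by omega)
  refine C_two_three_eq_zero C ?_ ?_ ?_ ?_
  · intro i j hi hj hn
    have h1 := hC i j hi hj hn
    have h2 := hC j i hj hi (by omega)
    rw [add_comm j i, ← lie_skew] at h2
    apply eq_neg_of_add_eq_zero_left
    apply h.coeff_eq_zero (k := i + j + 1) (by omega) hn
    convert neg_mem (add_mem h1 h2) using 1
    module
  · intro i j hi hj hn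
    have h1 := h.lie_mem h.x_mem (hC i j hi hj (by omega))
    have h2 := hC (i + 1) j (by omega) hj (by omega)
    have h3 := hC i (j + 1) hi (by omega) (by omega)
    rw [lie_sub, lie_smul, leibniz_lie, h.lie_u i hi, h.lie_u j hj, h.lie_u _ (by omega),
      show 1 + (i + j + 2) = i + j + 3 by omega] at h1
    rw [show i + 1 + j = i + j + 1 by omega] at h2
    rw [show i + (j + 1) = i + j + 1 by omega] at h3
    rw [← sub_eq_zero]
    apply h.coeff_eq_zero (k := i + j + 2) (by omega) hn
    convert sub_mem (add_mem h2 h3) h1 using 1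
    module
  · have key : ∀ i j k m, 1 ≤ i → 1 ≤ j → 1 ≤ k → i + j + k + 2 = m → m + 1 < 14 →
        ⁅⁅u i, u j⁆, u k⁆ - (C i j * C (i + j + 1) k) • u m ∈ G (m + 1) := by
      intro i j k m hi hj hk hm hn
      have h1 := h.lie_mem_u_mem (by omega) hk (by omega) (hC i j hi hj (by omega))
      have h2 := (G _).smul_mem (C i j) (hC (i + j + 1) k (by omega) hk (by omega))
      rw [sub_lie, smul_lie, show i + j + 2 + k + 1 = m + 1 by omega] at h1
      rw [show i + j + 1 + k + 1 = m by omega, show i + j + 1 + k + 2 = m + 1 by omega] at h2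
      convert add_mem h1 h2 using 1
      module
    intro i j k hi hj hk hn
    have h1 := key i j k (i + j + k + 2) hi hj hk rfl hn
    have h2 := key j k i (i + j + k + 2) hj hk hi (by omega) hn
    have h3 := key k i j (i + j + k + 2) hk hi hj (by omega) hn
    have h4 : ⁅⁅u i, u j⁆, u k⁆ + ⁅⁅u j, u k⁆, u i⁆ + ⁅⁅u k, u i⁆, u j⁆ = 0 := by
      rw [← lie_skew ⁅u i, u j⁆ (u k), ← lie_skew ⁅u j, u k⁆ (u i), ← lie_skew ⁅u k, u i⁆ (u j),
        ← neg_add, ← neg_add, lie_jacobi, neg_zero]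
    apply h.coeff_eq_zero (k := i + j + k + 2) (by omega) (by omega)
    convert sub_mem (zero_mem _) (add_mem (add_mem h1 h2) h3) using 1
    rw [← h4]
    module
  · have top : ∀ i j k, 1 ≤ i → 1 ≤ j → 1 ≤ k → i + j + k = 12 →
        ⁅⁅u i, u j⁆, u k⁆ = C i j • ⁅u (i + j + 1), u k⁆ := by
      intro i j k hi hj hk hn
      have h1 := h.lie_mem (hC i j hi hj (by omega)) (h.u_mem k hk)
      rw [show i + j + 2 + k = 14 by omega, sub_lie, smul_lie] at h1
      exact sub_eq_zero.mp (hzero h1)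
    have e7 := hshift 6 6 (by omega) (by omega) rfl
    have e8 := hshift 7 5 (by omega) (by omega) rfl
    have e9 := hshift 8 4 (by omega) (by omega) rfl
    have e10 := hshift 9 3 (by omega) (by omega) rfl
    have e11 := hshift 10 2 (by omega) (by omega) rfl
    norm_num only at e7 e8 e9 e10 e11
    rw [e7, neg_neg] at e8
    rw [e8] at e9
    rw [e9, neg_neg] at e10
    rw [e10] at e11
    have h1 := top 2 3 7 (by omega) (by omega) (by omega) rfl
    have h2 := top 3 7 2 (by omega) (by omega) (by omega) rfl
    have h3 := top 2 7 3 (by omega) (by omega) (by omega) rfl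
    norm_num only at h1 h2 h3
    rw [e11] at h2
    rw [e10] at h3
    have h4 : ⁅⁅u 2, u 3⁆, u 7⁆ + ⁅⁅u 3, u 7⁆, u 2⁆ - ⁅⁅u 2, u 7⁆, u 3⁆ = 0 := by
      rw [lie_lie (u 2) (u 3), ← lie_skew ⁅u 3, u 7⁆ (u 2), ← lie_skew ⁅u 2, u 7⁆ (u 3)]
      abel
    rw [h1, h2, h3] at h4
    have h5 : (C 2 3 - C 3 7 - C 2 7) • ⁅u 6, u 7⁆ = 0 := by
      rw [← h4]
      module
    exact (smul_eq_zero.mp h5).resolve_right hv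

/-- The derived length is bounded by three: `h.lie_self_mem` bounds the brackets of `G 2` with
itself, and then those of the resulting ideal `G 5`, `G 6` or `G 7`. -/
theorem exists_ideal [CharZero K] (h : IsAdapted n G x u) (hn : n ≤ 14) :
    ∃ p, (∀ a ∈ G 2, ∀ b ∈ G 2, ⁅a, b⁆ ∈ G p) ∧ ∀ a ∈ G p, ∀ b ∈ G p, ⁅a, b⁆ = 0 := by
  have hzero : ∀ {m} {a : L}, n ≤ m → a ∈ G m → a = 0 := by
    intro m a hm ha
    simpa [h.bot] using h.anti hm ha
  by_cases hn11 : n ≤ 11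
  · exact ⟨5, fun a ha b hb => h.lie_self_mem_succ le_rfl ha hb,
      fun a ha b hb => hzero hn11 (h.lie_self_mem_succ (by omega) ha hb)⟩
  have h23 : ⁅u 2, u 3⁆ ∈ G 6 := h.lie_u_mem (i := 2) (j := 3) (by omega) (by omega) (by omega)
  have h2 : ∀ b ∈ G 4, ⁅u 2, b⁆ ∈ G 7 := fun b hb => by
    rw [← lie_skew]
    exact neg_mem (h.lie_mem_u_mem (p := 4) (k := 2) (by omega) (by omega) (by omega) hb)
  have h2' : ∀ b ∈ G 3, ∃ t : K, ⁅u 2, b⁆ - t • ⁅u 2, u 3⁆ ∈ G 7 := fun b hb => by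
    obtain ⟨t, ht⟩ := h.span 3 (by omega) b hb
    exact ⟨t, by simpa using h2 _ ht⟩
  have hG6 : ∀ a ∈ G 2, ∀ b ∈ G 2, ⁅a, b⁆ ∈ G 6 := by
    refine fun a ha b hb => h.lie_self_mem le_rfl _ (h.anti (by omega)) (fun c hc => ?_) ha hb
    obtain ⟨t, ht⟩ := h2' c hc
    simpa using add_mem (h.anti (by omega) ht) ((G 6).smul_mem t h23)
  by_cases hn13 : n ≤ 13
  · exact ⟨6, hG6, fun a ha b hb => hzero hn13 (h.lie_self_mem_succ (by omega) ha hb)⟩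
  obtain rfl : n = 14 := by omega
  rcases h.lie_eq_zero_or with h0 | h7
  · refine ⟨6, hG6, fun a ha b hb => ?_⟩
    refine hzero le_rfl (h.lie_self_mem (by omega) _ (h.anti (by omega)) (fun c hc => ?_) ha hb)
    obtain ⟨t, ht⟩ := h.span 7 (by omega) c hc
    have := h.lie_mem (h.u_mem 6 (by omega)) ht
    simpa [h0] using this
  · refine ⟨7, fun a ha b hb => ?_, fun a ha b hb => hzero (by omega) (h.lie_mem ha hb)⟩
    refine h.lie_self_mem le_rfl _ le_rfl (fun c hc => ?_) ha hb
    obtain ⟨t, ht⟩ := h2' c hc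
    simpa using add_mem ht ((G 7).smul_mem t h7)

end IsAdapted

/-! ### Existence of adapted sequences -/

section Existence

variable {K L : Type*} [Field K] [LieRing L] [LieAlgebra K L]

theorem lie_mem_lowerCentralSeries (i : ℕ) : ∀ (j : ℕ) (a b : L),
    a ∈ LieModule.lowerCentralSeries K L L i → b ∈ LieModule.lowerCentralSeries K L L j →
    ⁅a, b⁆ ∈ LieModule.lowerCentralSeries K L L (i + j + 1) := by
  induction i with
  | zero =>
    intro j a b _ hb
    rw [zero_add, LieModule.lowerCentralSeries_succ]
    exact LieSubmodule.lie_mem_lie (LieSubmodule.mem_top a) hb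
  | succ i ih =>
    intro j a b ha hb
    rw [LieModule.lowerCentralSeries_succ, ← LieSubmodule.mem_toSubmodule,
      LieSubmodule.lieIdeal_oper_eq_linear_span'] at ha
    induction ha using Submodule.span_induction with
    | mem a h =>
      obtain ⟨y, -, m, hm, rfl⟩ := h
      rw [lie_lie]
      refine sub_mem ?_ ?_
      · rw [show i + 1 + j + 1 = i + j + 1 + 1 by omega, LieModule.lowerCentralSeries_succ]
        exact LieSubmodule.lie_mem_lie (LieSubmodule.mem_top y) (ih j m b hm hb)
      · rw [show i + 1 + j + 1 = i + (j + 1) + 1 by omega]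
        refine ih (j + 1) m _ hm ?_
        rw [LieModule.lowerCentralSeries_succ]
        exact LieSubmodule.lie_mem_lie (LieSubmodule.mem_top y) hb
    | zero => rw [zero_lie]; exact zero_mem _
    | add a a' _ _ h h' => rw [add_lie]; exact add_mem h h'
    | smul t a _ h => rw [smul_lie]; exact (LieModule.lowerCentralSeries K L L (i + 1 + j + 1)).smul_mem t h

theorem exists_sub_smul_mem [FiniteDimensional K L] {A B : Submodule K L} (hBA : B ≤ A)
    (hfin : Module.finrank K A ≤ Module.finrank K B + 1) {w : L} (hwA : w ∈ A) (hwB : w ∉ B)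
    {a : L} (ha : a ∈ A) : ∃ t : K, a - t • w ∈ B := by
  have hlt : B < B ⊔ K ∙ w := by
    refine lt_of_le_of_ne le_sup_left fun h => hwB ?_
    rw [h]
    exact Submodule.mem_sup_right (Submodule.mem_span_singleton_self w)
  have hle : B ⊔ K ∙ w ≤ A := sup_le hBA ((Submodule.span_singleton_le_iff_mem _ _).mpr hwA)
  have heq := Submodule.eq_of_le_of_finrank_le hle
    (hfin.trans (Submodule.finrank_lt_finrank_of_lt hlt))
  rw [← heq, Submodule.mem_sup] at ha
  obtain ⟨b, hb, z, hz, rfl⟩ := ha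
  obtain ⟨t, rfl⟩ := Submodule.mem_span_singleton.mp hz
  exact ⟨t, by simpa using hb⟩

variable {n : ℕ}

/-- The lower central series strictly decreases until it reaches zero. -/
theorem not_lowerCentralSeries_le_succ
    (hfil1 : LieModule.lowerCentralSeries K L L (n - 1) = ⊥)
    (hfil2 : ∀ m < n - 1, LieModule.lowerCentralSeries K L L m ≠ ⊥) {k : ℕ} (hk : k < n - 1) :
    ¬ LieModule.lowerCentralSeries K L L k ≤ LieModule.lowerCentralSeries K L L (k + 1) := by
  intro h
  have hstab : ∀ m, LieModule.lowerCentralSeries K L L k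
      ≤ LieModule.lowerCentralSeries K L L (k + m) := by
    intro m
    induction m with
    | zero => exact le_rfl
    | succ m ih =>
      refine h.trans ?_
      rw [← add_assoc, LieModule.lowerCentralSeries_succ, LieModule.lowerCentralSeries_succ]
      exact LieSubmodule.mono_lie_right _ ih
  apply hfil2 k hk
  have := hstab (n - 1 - k)
  rwa [show k + (n - 1 - k) = n - 1 by omega, hfil1, le_bot_iff] at this

/-- In a filiform algebra all quotients of the lower central series but the first have dimension at
most one: the series has `n - 1` strict steps, and the first of them has codimension at least two,
since an algebra generated modulo its commutator ideal by one element equals its next term. -/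
theorem finrank_lowerCentralSeries_le [FiniteDimensional K L] (hn : Module.finrank K L = n)
    (hn3 : 3 ≤ n) (hfil1 : LieModule.lowerCentralSeries K L L (n - 1) = ⊥)
    (hfil2 : ∀ m < n - 1, LieModule.lowerCentralSeries K L L m ≠ ⊥) {k : ℕ} (hk : 1 ≤ k) :
    Module.finrank K (LieModule.lowerCentralSeries K L L k).toSubmodule ≤
      Module.finrank K (LieModule.lowerCentralSeries K L L (k + 1)).toSubmodule + 1 := by
  set g : ℕ → ℕ := fun k =>
    Module.finrank K (LieModule.lowerCentralSeries K L L k).toSubmodule with hg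
  have hstrict : ∀ k, k < n - 1 → g (k + 1) < g k := fun k hk =>
    Submodule.finrank_lt_finrank_of_lt (lt_of_le_not_ge
      (LieModule.antitone_lowerCentralSeries K L L (Nat.le_succ k))
      (not_lowerCentralSeries_le_succ hfil1 hfil2 hk))
  have h1 : g 1 + 2 ≤ n := by
    by_contra hcon
    apply not_lowerCentralSeries_le_succ hfil1 hfil2 (k := 1) (by omega)
    obtain ⟨w, -, hw⟩ := SetLike.not_le_iff_exists.mp
      (not_lowerCentralSeries_le_succ hfil1 hfil2 (k := 0) (by omega))
    have hsp : ∀ a : L, ∃ t : K, a - t • w ∈ LieModule.lowerCentralSeries K L L 1 := fun a =>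
      exists_sub_smul_mem (A := ⊤) (B := (LieModule.lowerCentralSeries K L L 1).toSubmodule) le_top
        (by rw [finrank_top, hn]; change n ≤ g 1 + 1; omega) Submodule.mem_top hw
        Submodule.mem_top
    rw [LieModule.lowerCentralSeries_succ, LieSubmodule.lieIdeal_oper_eq_span,
      LieSubmodule.lieSpan_le]
    rintro _ ⟨⟨a, -⟩, ⟨b, -⟩, rfl⟩
    obtain ⟨s, hs⟩ := hsp a
    obtain ⟨t, ht⟩ := hsp b
    have e : ⁅a, b⁆ = ⁅s • w, b - t • w⁆ + ⁅a - s • w, b⁆ := by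
      simp [sub_lie, lie_sub]
    change ⁅a, b⁆ ∈ LieModule.lowerCentralSeries K L L 2
    rw [e]
    exact add_mem (lie_mem_lowerCentralSeries 0 1 _ _ (by simp) ht)
      (lie_mem_lowerCentralSeries 1 0 _ _ hs (by simp))
  have hup : ∀ k, 1 ≤ k → k ≤ n - 1 → g k + k + 1 ≤ n := by
    intro k hk
    induction k, hk using Nat.le_induction with
    | base => intro _; omega
    | succ k hk ih =>
      intro hkn
      have := ih (by omega)
      have := hstrict k (by omega)
      omega
  have hlow : ∀ m k, k + m = n - 1 → m ≤ g k := by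
    intro m
    induction m with
    | zero => intros; exact Nat.zero_le _
    | succ m ih =>
      intro k hkm
      have := ih (k + 1) (by omega)
      have := hstrict k (by omega)
      omega
  change g k ≤ g (k + 1) + 1
  by_cases hkn : k < n - 1
  · have := hup k hk hkn.le
    have := hlow (n - 1 - (k + 1)) (k + 1) (by omega)
    omega
  · have : g k = 0 := by
      have h := LieModule.antitone_lowerCentralSeries K L L (not_lt.mp hkn)
      rw [hfil1, le_bot_iff] at h
      simp [hg, h]
    omega

/-- Existence of adapted sequences. As `K` is infinite, some `x` lies outside the finitely many
proper subspaces of elements that map `G k` into `G (k + 2)`; the first vector is then corrected by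
a multiple of `x` to make `⁅u 1, u 2⁆ ∈ G 4`. -/
theorem exists_isAdapted [Infinite K] [FiniteDimensional K L] (hn : Module.finrank K L = n)
    (hn3 : 3 ≤ n) (hfil1 : LieModule.lowerCentralSeries K L L (n - 1) = ⊥)
    (hfil2 : ∀ m < n - 1, LieModule.lowerCentralSeries K L L m ≠ ⊥) :
    ∃ x u, IsAdapted n (fun k => LieModule.lowerCentralSeries K L L (k - 1)) x u := by
  set G : ℕ → LieSubmodule K L L := fun k => LieModule.lowerCentralSeries K L L (k - 1) with hG
  have hanti : Antitone G := fun i j hij =>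
    LieModule.antitone_lowerCentralSeries K L L (Nat.sub_le_sub_right hij 1)
  have hlie : ∀ {i j : ℕ} {a b : L}, a ∈ G i → b ∈ G j → ⁅a, b⁆ ∈ G (i + j) := by
    intro i j a b ha hb
    exact LieModule.antitone_lowerCentralSeries K L L (by omega)
      (lie_mem_lowerCentralSeries (i - 1) (j - 1) a b ha hb)
  have hG1 : ∀ a, a ∈ G 1 := fun a => by simp [hG]
  let V : ℕ → Submodule K L := fun k =>
    { carrier := {x | ∀ a ∈ G k, ⁅x, a⁆ ∈ G (k + 2)}
      add_mem' := fun hx hy a ha => by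
        rw [add_lie]
        exact add_mem (hx a ha) (hy a ha)
      zero_mem' := fun a _ => by
        rw [zero_lie]
        exact zero_mem _
      smul_mem' := fun t x hx a ha => by
        rw [smul_lie]
        exact (G _).smul_mem t (hx a ha) }
  classical
  have hV : (⊤ : Submodule K L) ∉ (Finset.Icc 1 (n - 2)).image V := by
    intro h
    obtain ⟨k, hk, hVk⟩ := Finset.mem_image.mp h
    rw [Finset.mem_Icc] at hk
    apply not_lowerCentralSeries_le_succ hfil1 hfil2 (k := k) (by omega)
    obtain ⟨m, rfl⟩ : ∃ m, k = m + 1 := ⟨k - 1, by omega⟩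
    rw [LieModule.lowerCentralSeries_succ, LieSubmodule.lieIdeal_oper_eq_span,
      LieSubmodule.lieSpan_le]
    rintro _ ⟨⟨a, -⟩, ⟨b, hb⟩, rfl⟩
    have : a ∈ V (m + 1) := by
      rw [hVk]
      exact Submodule.mem_top
    exact this b hb
  obtain ⟨x, hx⟩ := (Set.ne_univ_iff_exists_notMem _).mp
    (Subspace.biUnion_ne_univ_of_top_notMem hV)
  have hxV : ∀ k, 1 ≤ k → k ≤ n - 2 → ∃ a ∈ G k, ⁅x, a⁆ ∉ G (k + 2) := by
    intro k h1 h2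
    by_contra! hcon
    apply hx
    simp only [Set.mem_iUnion]
    exact ⟨V k, Finset.mem_image_of_mem V (Finset.mem_Icc.mpr ⟨h1, h2⟩), hcon⟩
  obtain ⟨y, -, hy⟩ := hxV 1 le_rfl (by omega)
  set w : ℕ → L := fun k => (fun a => ⁅x, a⁆)^[k - 1] y with hw
  have hw1 : w 1 = y := rfl
  have hws : ∀ k, 1 ≤ k → ⁅x, w k⁆ = w (k + 1) := by
    intro k hk
    obtain ⟨m, rfl⟩ : ∃ m, k = m + 1 := ⟨k - 1, by omega⟩
    exact (Function.iterate_succ_apply' _ m y).symm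
  have hwG : ∀ k, 1 ≤ k → w k ∈ G k := by
    intro k hk
    induction k, hk using Nat.le_induction with
    | base => exact hG1 _
    | succ k hk ih =>
      rw [← hws k hk, add_comm]
      exact hlie (hG1 x) ih
  have hspan' : ∀ k, 2 ≤ k → w k ∉ G (k + 1) → ∀ a ∈ G k, ∃ t : K, a - t • w k ∈ G (k + 1) := by
    intro k hk hwk a ha
    obtain ⟨m, rfl⟩ : ∃ m, k = m + 1 := ⟨k - 1, by omega⟩
    exact exists_sub_smul_mem (A := (G (m + 1)).toSubmodule) (B := (G (m + 1 + 1)).toSubmodule)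
      (hanti (Nat.le_succ _))
      (finrank_lowerCentralSeries_le hn hn3 hfil1 hfil2 (k := m) (by omega)) (hwG _ (by omega))
      hwk ha
  have hind : ∀ k, 2 ≤ k → k < n → w k ∉ G (k + 1) := by
    intro k hk
    induction k, hk using Nat.le_induction with
    | base => exact fun _ => hy
    | succ k hk ih =>
      intro hkn hcon
      obtain ⟨a, ha, hxa⟩ := hxV k (by omega) (by omega)
      obtain ⟨t, ht⟩ := hspan' k hk (ih (by omega)) a ha
      apply hxa
      have h1 := hlie (hG1 x) ht
      rw [lie_sub, lie_smul, hws k (by omega), show 1 + (k + 1) = k + 2 by omega] at h1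
      simpa using add_mem h1 ((G _).smul_mem t hcon)
  have hbot : G n = ⊥ := hfil1
  have hspan : ∀ k, 2 ≤ k → ∀ a ∈ G k, ∃ t : K, a - t • w k ∈ G (k + 1) := by
    intro k hk a ha
    by_cases hkn : k < n
    · exact hspan' k hk (hind k hk hkn) a ha
    · have h0 := hanti (not_lt.mp hkn) ha
      rw [hbot, LieSubmodule.mem_bot] at h0
      exact ⟨0, by simp [h0]⟩
  obtain ⟨d, hd⟩ := hspan 3 (by omega) ⁅y, w 2⁆ (hlie (hG1 y) (hwG 2 (by omega)))
  refine ⟨x, fun k => if k = 1 then y - d • x else w k, hanti, hlie, hG1 x, ?_, ?_, ?_, ?_, hbot, ?_⟩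
  · intro k hk
    by_cases h1 : k = 1
    · subst h1; exact hG1 _
    · simpa only [h1, if_false] using hwG k hk
  · intro k hk
    have h2 : k + 1 ≠ 1 := by omega
    by_cases h1 : k = 1
    · subst h1
      simp only [if_true, h2, if_false, lie_sub, lie_smul, lie_self, smul_zero, sub_zero]
      exact hws 1 le_rfl
    · simpa only [h1, h2, if_false] using hws k hk
  · intro k hk
    have h1 : k ≠ 1 := by omega
    simpa only [h1, if_false] using hspan k hk
  · intro k hk
    have h1 : k ≠ 1 := by omega
    simpa only [h1, if_false] using hind k hk
  · have h1 : (2 : ℕ) ≠ 1 := by omega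
    simp only [if_true, h1, if_false, sub_lie, smul_lie]
    rwa [hws 2 (by omega)]

end Existence

end Filiform

/-- A filiform nilpotent Lie algebra (of dimension `n` and nilpotency class `n - 1`)
of dimension `n ≤ 14` over a field of characteristic zero has derived length at most `3`,
i.e. `f^(3) = 0`. -/
theorem stmt_7 (K : Type*) [Field K] [CharZero K]
    (f : Type*) [LieRing f] [LieAlgebra K f] [FiniteDimensional K f]
    (n : ℕ) (hn : Module.finrank K f = n) (hn1 : 1 ≤ n) (hn14 : n ≤ 14)
    (hfil1 : LieModule.lowerCentralSeries K f f (n - 1) = ⊥)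
    (hfil2 : ∀ m < n - 1, LieModule.lowerCentralSeries K f f m ≠ ⊥) :
    LieAlgebra.derivedSeries K f 3 = ⊥ := by
  by_cases hn3 : 3 ≤ n
  · have : Infinite K := Infinite.of_injective _ (Nat.cast_injective (R := K))
    obtain ⟨x, u, h⟩ := Filiform.exists_isAdapted hn hn3 hfil1 hfil2
    obtain ⟨p, hp, hp0⟩ := h.exists_ideal hn14
    have h1 := LieModule.derivedSeries_le_lowerCentralSeries K f 1
    have h2 : LieAlgebra.derivedSeries K f 2 ≤ LieModule.lowerCentralSeries K f f (p - 1) := by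
      rw [LieAlgebra.derivedSeries_def, LieAlgebra.derivedSeriesOfIdeal_succ,
        LieSubmodule.lie_le_iff]
      exact fun a ha b hb => hp a (h1 ha) b (h1 hb)
    rw [LieAlgebra.derivedSeries_def, LieAlgebra.derivedSeriesOfIdeal_succ,
      LieSubmodule.lie_eq_bot_iff]
    exact fun a ha b hb => hp0 a (h2 ha) b (h2 hb)
  · rw [eq_bot_iff, ← hfil1]
    exact (LieModule.derivedSeries_le_lowerCentralSeries K f 3).trans
      (LieModule.antitone_lowerCentralSeries K f f (by omega))
end

section
/- There exists a nilpotent Lie algebra g over ℚ of dimension 14 with derived length exactly 4 and nilpotency class exactly 11, which admits a non-singular (invertible) derivation. -/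
/-!
A Lie algebra as required can be taken to be graded, `g = g₁ ⊕ ⋯ ⊕ g₁₁`, generated by `g₁`, with
`dim g₁ = 2`. The derivation acting on `g_d` as multiplication by `d` is then invertible.
Since `g₂` is a line, the second derived algebra starts in degree `2 + 3 = 5`; if it is a line in
degrees `5` and `6`, the third one starts in degree `5 + 6 = 11`. So everything comes down to
finding such an algebra of total dimension `14` in which `[[g₂, g₃], [g₂, g₄]] ≠ 0`. The algebra
`L14` below has graded dimensions `2, 1, 1, 1, 2, 1, 2, 1, 1, 1, 1`, obtained by successive
one- or two-dimensional central extensions starting from the abelian algebra on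
`e₀`, `e₁`.

The upper bounds on both series come from the ideals `tail m`, spanned by the `eᵢ` with `m ≤ i`:
the coordinates are ordered by degree, so these ideals refine the grading filtration. The lower
bounds follow by exhibiting `e₁₃` as an iterated bracket: up to sign, as a word of length `11` in
`e₀`, `e₁`
(`e13_mem_lowerCentralSeries`), and as `[[e₂, e₃], [e₂, e₄]]`
(`e13_mem_derivedSeries`).
-/

/-- The underlying space of the algebra, with basis `e₀, …, e₁₃`. This is a `def` because functions
into a ring already carry a (trivial) commutator bracket. -/
def L14 : Type := Fin 14 → ℚ

namespace L14

instance : AddCommGroup L14 := inferInstanceAs (AddCommGroup (Fin 14 → ℚ))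
instance : Module ℚ L14 := inferInstanceAs (Module ℚ (Fin 14 → ℚ))

@[ext] lemma ext {u v : L14} (h : ∀ i, u i = v i) : u = v := funext h

@[simp] lemma add_apply (u v : L14) (i : Fin 14) : (u + v) i = u i + v i := rfl
@[simp] lemma sub_apply (u v : L14) (i : Fin 14) : (u - v) i = u i - v i := rfl
@[simp] lemma neg_apply (u : L14) (i : Fin 14) : (-u) i = -u i := rfl
@[simp] lemma smul_apply (t : ℚ) (u : L14) (i : Fin 14) : (t • u) i = t * u i := rfl
@[simp] lemma zero_apply (i : Fin 14) : (0 : L14) i = 0 := rfl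

/-- The `2 × 2` minor `uᵢ vⱼ - uⱼ vᵢ`, the coordinate of `u ∧ v` along `eᵢ ∧ eⱼ`. -/
def minor (u v : L14) (i j : Fin 14) : ℚ := u i * v j - u j * v i

/-- The coordinates of the bracket. A term `c * minor u v i j` in coordinate `k` means that
`[eᵢ, eⱼ]` has coefficient `c` along `eₖ`. -/
def brCoord (u v : L14) : Fin 14 → ℚ
  | 0 => 0
  | 1 => 0
  | 2 => minor u v 0 1
  | 3 => minor u v 0 2
  | 4 => minor u v 0 3
  | 5 => minor u v 0 4
  | 6 => -minor u v 1 4 + minor u v 2 3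
  | 7 => minor u v 0 6 - 2 * minor u v 1 5 + minor u v 2 4
  | 8 => -minor u v 1 7 + minor u v 2 6
  | 9 => minor u v 0 7 - 2 * minor u v 2 5 + 3 * minor u v 3 4
  | 10 => 2 * minor u v 0 8 - minor u v 1 9 - minor u v 2 7 + 3 * minor u v 3 6
  | 11 => minor u v 0 10 - minor u v 2 9 + 3 * minor u v 4 6
  | 12 => minor u v 0 11 - minor u v 3 9 + minor u v 4 7 + 2 * minor u v 5 6
  | 13 => minor u v 1 12 - minor u v 2 11 + minor u v 3 10 - 2 * minor u v 4 8 + minor u v 6 7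

/-- The bracket of the algebra. -/
def br (u v : L14) : L14 := brCoord u v

lemma br_apply (u v : L14) (i : Fin 14) : br u v i = brCoord u v i := rfl

instance : LieRing L14 where
  bracket := br
  add_lie u v w := by
    change br (u + v) w = br u w + br v w
    ext i; fin_cases i <;> simp [br_apply, brCoord, minor] <;> ring
  lie_add u v w := by
    change br u (v + w) = br u v + br u w
    ext i; fin_cases i <;> simp [br_apply, brCoord, minor] <;> ring
  lie_self u := by
    change br u u = 0
    ext i; fin_cases i <;> simp [br_apply, brCoord, minor] <;> ring
  leibniz_lie u v w := by
    change br u (br v w) = br (br u v) w + br v (br u w)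
    ext i; fin_cases i <;> simp [br_apply, brCoord, minor] <;> ring

lemma lie_def (u v : L14) : ⁅u, v⁆ = br u v := rfl

instance : LieAlgebra ℚ L14 where
  lie_smul t u v := by
    ext i; fin_cases i <;> simp [lie_def, br_apply, brCoord, minor] <;> ring

/-- The ideal spanned by the `eᵢ` with `m ≤ i`. -/
def tail (m : ℕ) : LieIdeal ℚ L14 where
  carrier := {v | ∀ i : Fin 14, i.val < m → v i = 0}
  add_mem' hu hv i hi := by simp [hu i hi, hv i hi]
  zero_mem' i _ := rfl
  smul_mem' t u hu i hi := by simp [hu i hi]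
  lie_mem := by
    intro u v hv i hi
    -- `[eᵢ, eⱼ]` only involves `eₖ` with `i, j < k`
    have h : ∀ j, j < i → v j = 0 := fun j hj => hv j (lt_trans hj hi)
    clear hi
    revert h
    fin_cases i <;> intro h <;> simp [lie_def, br_apply, brCoord, minor, h]

lemma mem_tail {m : ℕ} {v : L14} : v ∈ tail m ↔ ∀ i : Fin 14, i.val < m → v i = 0 := Iff.rfl

lemma tail_zero : tail 0 = ⊤ := by
  rw [eq_top_iff]
  exact fun v _ i hi => absurd hi (Nat.not_lt_zero _)

lemma tail_eq_bot : tail 14 = ⊥ := by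
  rw [eq_bot_iff]
  exact fun v hv => (LieSubmodule.mem_bot v).2 (ext fun i => hv i i.isLt)

/-- The bracket maps `tail a × tail b` into `tail c`. -/
def BracketLE (a b c : ℕ) : Prop :=
  ∀ u v : L14, u ∈ tail a → v ∈ tail b → br u v ∈ tail c

lemma BracketLE.le {a b c : ℕ} (h : BracketLE a b c) {I J : LieIdeal ℚ L14}
    (hI : I ≤ tail a) (hJ : J ≤ tail b) : ⁅I, J⁆ ≤ tail c := by
  rw [LieSubmodule.lie_le_iff]
  exact fun u hu v hv => h u v (hI hu) (hJ hv)

lemma lcs_step {n b c : ℕ} (h : BracketLE 0 b c)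
    (hn : LieModule.lowerCentralSeries ℚ L14 L14 n ≤ tail b) :
    LieModule.lowerCentralSeries ℚ L14 L14 (n + 1) ≤ tail c := by
  rw [LieModule.lowerCentralSeries_succ]
  exact h.le tail_zero.ge hn

lemma derived_step {n b c : ℕ} (h : BracketLE b b c)
    (hn : LieAlgebra.derivedSeries ℚ L14 n ≤ tail b) :
    LieAlgebra.derivedSeries ℚ L14 (n + 1) ≤ tail c := by
  rw [LieAlgebra.derivedSeries_def, LieAlgebra.derivedSeriesOfIdeal_succ]
  exact h.le hn hn

lemma lowerCentralSeries_eq_bot : LieModule.lowerCentralSeries ℚ L14 L14 11 = ⊥ := by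
  rw [eq_bot_iff, ← tail_eq_bot]
  have h0 : LieModule.lowerCentralSeries ℚ L14 L14 0 ≤ tail 0 := tail_zero.ge
  -- `tail b` runs through the sums of the homogeneous components of degree greater than `n`
  refine lcs_step (b := 13) ?_ <| lcs_step (b := 12) ?_ <| lcs_step (b := 11) ?_ <|
    lcs_step (b := 10) ?_ <| lcs_step (b := 8) ?_ <| lcs_step (b := 7) ?_ <|
    lcs_step (b := 5) ?_ <| lcs_step (b := 4) ?_ <| lcs_step (b := 3) ?_ <|
    lcs_step (b := 2) ?_ <| lcs_step ?_ h0
  all_goals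
    intro u v _ hv i hi
    rw [mem_tail] at hv
    fin_cases i <;> simp [br_apply, brCoord, minor, hv] at hi ⊢

lemma derivedSeries_eq_bot : LieAlgebra.derivedSeries ℚ L14 4 = ⊥ := by
  rw [eq_bot_iff, ← tail_eq_bot]
  have h0 : LieAlgebra.derivedSeries ℚ L14 0 ≤ tail 0 := tail_zero.ge
  -- `b = 6` rather than `5`: in degree `5` the second derived algebra only has `[e₂, e₃] = e₆`
  refine derived_step (b := 13) ?_ <| derived_step (b := 6) ?_ <| derived_step (b := 2) ?_ <|
    derived_step ?_ h0
  all_goals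
    intro u v hu hv i hi
    rw [mem_tail] at hu hv
    fin_cases i <;> simp [br_apply, brCoord, minor, hu, hv] at hi ⊢

/-- The basis vector `eᵢ`. -/
def e (i : Fin 14) : L14 := fun j => if j = i then 1 else 0

lemma e_ne_zero (i : Fin 14) : e i ≠ 0 := fun h => by
  simpa [e] using congrFun h i

lemma lie_mem_lcs {n : ℕ} (u : L14) {v w : L14} (h : ⁅u, v⁆ = w)
    (hv : v ∈ LieModule.lowerCentralSeries ℚ L14 L14 n) :
    w ∈ LieModule.lowerCentralSeries ℚ L14 L14 (n + 1) := by
  rw [LieModule.lowerCentralSeries_succ, ← h]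
  exact LieSubmodule.lie_mem_lie (LieSubmodule.mem_top u) hv

lemma lie_mem_derived {n : ℕ} {u v w : L14} (h : ⁅u, v⁆ = w)
    (hu : u ∈ LieAlgebra.derivedSeries ℚ L14 n) (hv : v ∈ LieAlgebra.derivedSeries ℚ L14 n) :
    w ∈ LieAlgebra.derivedSeries ℚ L14 (n + 1) := by
  rw [LieAlgebra.derivedSeries_def, LieAlgebra.derivedSeriesOfIdeal_succ, ← h]
  exact LieSubmodule.lie_mem_lie hu hv

lemma e13_mem_lowerCentralSeries : e 13 ∈ LieModule.lowerCentralSeries ℚ L14 L14 10 := by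
  have h1 : e 1 ∈ LieModule.lowerCentralSeries ℚ L14 L14 0 := LieSubmodule.mem_top _
  refine lie_mem_lcs (v := e 12) (e 1) ?_ <| lie_mem_lcs (v := e 11) (e 0) ?_ <|
    lie_mem_lcs (v := e 10) (e 0) ?_ <| lie_mem_lcs (v := e 9) (-e 1) ?_ <|
    lie_mem_lcs (v := e 7) (e 0) ?_ <| lie_mem_lcs (v := e 6) (e 0) ?_ <|
    lie_mem_lcs (v := e 4) (-e 1) ?_ <| lie_mem_lcs (v := e 3) (e 0) ?_ <|
    lie_mem_lcs (v := e 2) (e 0) ?_ <| lie_mem_lcs (e 0) ?_ h1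
  all_goals
    ext i
    fin_cases i <;> simp [lie_def, br_apply, brCoord, minor, e]

lemma e13_mem_derivedSeries : e 13 ∈ LieAlgebra.derivedSeries ℚ L14 3 := by
  have h (v : L14) : v ∈ LieAlgebra.derivedSeries ℚ L14 0 := LieSubmodule.mem_top v
  have h2 : e 2 ∈ LieAlgebra.derivedSeries ℚ L14 1 := by
    refine lie_mem_derived (u := e 0) (v := e 1) ?_ (h _) (h _)
    ext i
    fin_cases i <;> simp [lie_def, br_apply, brCoord, minor, e]
  have h3 : e 3 ∈ LieAlgebra.derivedSeries ℚ L14 1 := by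
    refine lie_mem_derived (u := e 0) (v := e 2) ?_ (h _) (h _)
    ext i
    fin_cases i <;> simp [lie_def, br_apply, brCoord, minor, e]
  have h4 : e 4 ∈ LieAlgebra.derivedSeries ℚ L14 1 := by
    refine lie_mem_derived (u := e 0) (v := e 3) ?_ (h _) (h _)
    ext i
    fin_cases i <;> simp [lie_def, br_apply, brCoord, minor, e]
  have h6 : e 6 ∈ LieAlgebra.derivedSeries ℚ L14 2 := by
    refine lie_mem_derived ?_ h2 h3
    ext i
    fin_cases i <;> simp [lie_def, br_apply, brCoord, minor, e]
  have h7 : e 7 ∈ LieAlgebra.derivedSeries ℚ L14 2 := by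
    refine lie_mem_derived ?_ h2 h4
    ext i
    fin_cases i <;> simp [lie_def, br_apply, brCoord, minor, e]
  refine lie_mem_derived ?_ h6 h7
  ext i
  fin_cases i <;> simp [lie_def, br_apply, brCoord, minor, e]

/-- The degree of `eᵢ` in the grading for which `e₀` and `e₁` have degree `1`. -/
def deg : Fin 14 → ℚ := ![1, 1, 2, 3, 4, 5, 5, 6, 7, 7, 8, 9, 10, 11]

lemma deg_ne_zero (i : Fin 14) : deg i ≠ 0 := by
  fin_cases i <;> simp [deg]

/-- The linear map multiplying each `eᵢ` by its degree. -/
def euler : L14 →ₗ[ℚ] L14 where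
  toFun v := fun i => deg i * v i
  map_add' u v := ext fun i => mul_add (deg i) (u i) (v i)
  map_smul' t v := ext fun i => mul_left_comm (deg i) t (v i)

lemma euler_apply (v : L14) (i : Fin 14) : euler v i = deg i * v i := rfl

/-- The map `euler` as a derivation. -/
def eulerDerivation : LieDerivation ℚ L14 L14 where
  toLinearMap := euler
  leibniz' u v := by
    ext i
    fin_cases i <;> simp [euler_apply, lie_def, br_apply, brCoord, minor, deg] <;> ring

lemma eulerDerivation_apply (v : L14) (i : Fin 14) : eulerDerivation v i = deg i * v i := rfl

lemma eulerDerivation_bijective : Function.Bijective eulerDerivation := by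
  refine ⟨fun u v h => ext fun i => ?_, fun v => ⟨fun i => (deg i)⁻¹ * v i, ext fun i => ?_⟩⟩
  · have := congrFun h i
    rw [eulerDerivation_apply, eulerDerivation_apply] at this
    exact mul_left_cancel₀ (deg_ne_zero i) this
  · exact mul_inv_cancel_left₀ (deg_ne_zero i) (v i)

end L14

/-- There exists a nilpotent Lie algebra over `ℚ` of dimension `14` with derived length
exactly `4` and nilpotency class exactly `11`, admitting a non-singular derivation. -/
theorem stmt_8 :
    ∃ (g : Type) (_ : LieRing g) (_ : LieAlgebra ℚ g),
      FiniteDimensional ℚ g ∧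
      Module.finrank ℚ g = 14 ∧
      LieModule.lowerCentralSeries ℚ g g 11 = ⊥ ∧
      LieModule.lowerCentralSeries ℚ g g 10 ≠ ⊥ ∧
      LieAlgebra.derivedSeries ℚ g 4 = ⊥ ∧
      LieAlgebra.derivedSeries ℚ g 3 ≠ ⊥ ∧
      ∃ D : LieDerivation ℚ g g, Function.Bijective D := by
  refine ⟨L14, inferInstance, inferInstance,
    inferInstanceAs (FiniteDimensional ℚ (Fin 14 → ℚ)), Module.finrank_fin_fun ℚ,
    L14.lowerCentralSeries_eq_bot, fun h => ?_, L14.derivedSeries_eq_bot, fun h => ?_,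
    L14.eulerDerivation, L14.eulerDerivation_bijective⟩
  · exact L14.e_ne_zero 13 ((LieSubmodule.mem_bot _).1 (h ▸ L14.e13_mem_lowerCentralSeries))
  · exact L14.e_ne_zero 13 ((LieSubmodule.mem_bot _).1 (h ▸ L14.e13_mem_derivedSeries))
end

section
/- Let p be a prime and let G be a finite p-group whose derived length is k ≥ 4. Then the order of G is at least p^{2^{k-1} + 2k − 4}. -/
/-!
A normal subgroup `N` of a finite `p`-group `G` is said to have *weight* `w` if `⁅A, N⁆ ≤ B` for
all normal subgroups `B ≤ A` of `G` with `|A : B|` dividing `p ^ w`. The `w`-th term of the lower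
central series has weight `w`, and weight is all that is used about the derived series: `G` has
weight `1` (`weight_top`), and by the three subgroups lemma `⁅N, N⁆` has weight `2 * w` if `N` has
weight `w` (`Weight.commutator`). Hence the `i`-th derived subgroup `Dᵢ` has weight `2 ^ i`.

A subgroup `N` of weight `w ≥ 1` with `⁅N, N⁆ ≠ ⊥` satisfies `|N : ⁅N, N⁆| ≥ p ^ (w + 1)`
(`Weight.relIndex_commutator`, due to P. Hall). So `|Dᵢ : Dᵢ₊₁| ≥ p ^ (2 ^ i + 1)` for all
`i ≤ k - 2`. This alone falls short of the required bound, and the gap is closed by showing that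
equality is rare. Suppose that `|N : ⁅N, N⁆| = p ^ (w + 1)`. Then `⁅N, N⁆` contains only one
normal subgroup of `G` of index `p` (`Weight.unique_of_relIndex`): modulo the intersection of two
such subgroups, `⁅N, N⁆` lies in the image of the homomorphism `n ↦ ⁅y, n⁆` for a suitable `y`,
and this image has order at most `p`. On the other hand, if `N` has weight `w` and contains only one normal
subgroup of `G` of index `p`, then the weight of `⁅N, N⁆` is even `2 * w + 1`
(`Weight.commutator_of_unique`). Therefore equality at level `d` forces weight `2 ^ e + 1`, and so
strict inequality, at all levels `e ≥ d + 2`: equality occurs for at most two, consecutive, values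
of `i`. Adding up the exponents, with at least `1` for the last nontrivial term of the series,
gives at least `∑_{i < k - 1} (2 ^ i + 2) - 2 + 1 = 2 ^ (k - 1) + 2 * k - 4`.
-/

namespace DerivedLength

open scoped commutatorElement

variable {G : Type*} [Group G]

/-! ### Normal subgroups of finite `p`-groups -/

/-- The three subgroups lemma modulo a normal subgroup. -/
theorem three_subgroups {A B C D : Subgroup G} [D.Normal] (h1 : ⁅⁅B, C⁆, A⁆ ≤ D)
    (h2 : ⁅⁅C, A⁆, B⁆ ≤ D) : ⁅⁅A, B⁆, C⁆ ≤ D := by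
  have key : ∀ H : Subgroup G, H ≤ D ↔ H.map (QuotientGroup.mk' D) = ⊥ := fun H => by
    rw [Subgroup.map_eq_bot_iff, QuotientGroup.ker_mk']
  rw [key] at h1 h2 ⊢
  simp only [Subgroup.map_commutator] at h1 h2 ⊢
  exact Subgroup.commutator_commutator_eq_bot_of_rotate h1 h2

theorem mem_iff_commute {D : Subgroup G} [D.Normal] {a b : G} :
    ⁅a, b⁆ ∈ D ↔ Commute (a : G ⧸ D) (b : G ⧸ D) := by
  rw [← commutatorElement_eq_one_iff_commute]
  exact (QuotientGroup.eq_one_iff _).symm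

theorem relIndex_eq_pow {p : ℕ} [Fact p.Prime] [Finite G] (hG : IsPGroup p G) (A B : Subgroup G) :
    ∃ n, B.relIndex A = p ^ n :=
  (hG.to_subgroup A).index (B.subgroupOf A)

/-- If `B < A` are normal subgroups of a finite `p`-group `G`, then some subgroup of order `p` of
`A / B` is central in `G / B`. -/
theorem exists_normal_above {p : ℕ} [hp : Fact p.Prime] [Finite G] (hG : IsPGroup p G)
    {A B : Subgroup G} [A.Normal] [B.Normal] (hBA : B ≤ A) (hne : ¬ A ≤ B) :
    ∃ C : Subgroup G, C.Normal ∧ B ≤ C ∧ C ≤ A ∧ B.relIndex C = p ∧ ⁅C, ⊤⁆ ≤ B := by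
  set q := QuotientGroup.mk' B with hq
  have hqs : Function.Surjective q := QuotientGroup.mk'_surjective B
  have hQ : IsPGroup p (G ⧸ B) := hG.to_quotient B
  have hN : (A.map q).Normal := ‹A.Normal›.map q hqs
  have hne' : A.map q ≠ ⊥ := by
    rw [Ne, Subgroup.map_eq_bot_iff, hq, QuotientGroup.ker_mk']; exact hne
  have hdvd : p ∣ Nat.card (A.map q) := by
    rcases (hQ.to_subgroup (A.map q)).card_eq_or_dvd with h | h
    · exact absurd ((A.map q).eq_bot_of_card_eq h) hne'
    · exact h
  -- a nontrivial normal subgroup of a `p`-group meets the centre: count the fixed points of the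
  -- conjugation action
  obtain ⟨⟨z, hzA⟩, hz, hz1⟩ :=
    (hQ.of_equiv ConjAct.toConjAct).exists_fixed_point_of_prime_dvd_card_of_fixed_point
      (A.map q) hdvd (a := 1) (fun g => smul_one g)
  have hzc : z ∈ Subgroup.center (G ⧸ B) := by
    rw [Subgroup.mem_center_iff]
    intro g
    have := congrArg Subtype.val (hz (ConjAct.toConjAct g))
    rw [ConjAct.Subgroup.val_conj_smul, ConjAct.smul_def] at this
    simp only [ConjAct.ofConjAct_toConjAct] at this
    exact mul_inv_eq_iff_eq_mul.mp this
  have hz1' : z ≠ 1 := fun h => hz1 (Subtype.ext h.symm)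
  have hI : (A.map q ⊓ Subgroup.center (G ⧸ B)) ≠ ⊥ := fun h =>
    hz1' (Subgroup.mem_bot.mp (h ▸ Subgroup.mem_inf.mpr ⟨hzA, hzc⟩))
  have hdvd' : p ∣ Nat.card ↥(A.map q ⊓ Subgroup.center (G ⧸ B)) := by
    rcases (hQ.to_subgroup (A.map q ⊓ Subgroup.center (G ⧸ B))).card_eq_or_dvd with h | h
    · exact absurd (Subgroup.eq_bot_of_card_eq _ h) hI
    · exact h
  obtain ⟨⟨c, hcI⟩, hc⟩ := exists_prime_orderOf_dvd_card' p hdvd'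
  obtain ⟨hcA, hcZ⟩ := Subgroup.mem_inf.mp hcI
  rw [Subgroup.orderOf_mk] at hc
  have hcn : (Subgroup.zpowers c).Normal :=
    ⟨fun x hx g => by
      have := Subgroup.mem_center_iff.mp (Subgroup.zpowers_le.mpr hcZ hx) g
      rwa [this, mul_inv_cancel_right]⟩
  have hker : (Subgroup.zpowers c).comap q ≥ B := by
    have := q.ker_le_comap (Subgroup.zpowers c)
    rwa [hq, QuotientGroup.ker_mk'] at this
  refine ⟨(Subgroup.zpowers c).comap q, hcn.comap q, hker, ?_, ?_, ?_⟩
  · have : (Subgroup.zpowers c).comap q ≤ (A.map q).comap q :=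
      Subgroup.comap_mono (Subgroup.zpowers_le.mpr hcA)
    refine this.trans ?_
    rw [Subgroup.comap_map_eq, hq, QuotientGroup.ker_mk']
    exact sup_le le_rfl hBA
  · have := Subgroup.relIndex_ker (K := (Subgroup.zpowers c).comap q) q
    rw [Subgroup.map_comap_eq_self_of_surjective hqs, Nat.card_zpowers, hc] at this
    rwa [hq, QuotientGroup.ker_mk'] at this
  · rw [Subgroup.commutator_le]
    intro g hg x _
    have hgZ : q g ∈ Subgroup.center (G ⧸ B) :=
      Subgroup.zpowers_le.mpr hcZ (Subgroup.mem_comap.mp hg)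
    rw [mem_iff_commute]
    exact (Subgroup.mem_center_iff.mp hgZ (q x)).symm

theorem exists_normal_between {p : ℕ} [hp : Fact p.Prime] [Finite G] (hG : IsPGroup p G)
    {A B : Subgroup G} [A.Normal] [B.Normal] (hBA : B ≤ A) (m n : ℕ)
    (h : B.relIndex A = p ^ (m + n)) :
    ∃ C : Subgroup G, C.Normal ∧ B ≤ C ∧ C ≤ A ∧ B.relIndex C = p ^ m ∧ C.relIndex A = p ^ n := by
  induction m generalizing n with
  | zero => exact ⟨B, inferInstance, le_rfl, hBA, by simp, by simpa using h⟩
  | succ m ih =>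
    obtain ⟨C, hC, hBC, hCA, h1, h2⟩ := ih (n + 1) (by rw [h]; congr 1; ring)
    have hne : ¬ A ≤ C := fun hle => by
      rw [Subgroup.relIndex_eq_one.mpr hle] at h2
      exact (Nat.one_lt_pow n.succ_ne_zero hp.out.one_lt).ne h2
    obtain ⟨C', hC', hCC', hCA', h3, -⟩ := exists_normal_above hG hCA hne
    refine ⟨C', hC', hBC.trans hCC', hCA', ?_, ?_⟩
    · rw [← Subgroup.relIndex_mul_relIndex B C C' hBC hCC', h1, h3, pow_succ]
    · have := Subgroup.relIndex_mul_relIndex C C' A hCC' hCA'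
      rw [h2, h3, pow_succ'] at this
      exact Nat.eq_of_mul_eq_mul_left hp.out.pos this

/-- A group is generated by a normal subgroup of prime index and one further element. -/
theorem exists_generator {p : ℕ} [hp : Fact p.Prime] {M N : Subgroup G} [M.Normal]
    (hMN : M ≤ N) (h : M.relIndex N = p) :
    ∃ x ∈ N, ∀ g ∈ N, ∃ i : ℤ, ∃ m ∈ M, x ^ i * m = g := by
  have hnot : ¬ N ≤ M := fun hle => hp.out.ne_one (h ▸ Subgroup.relIndex_eq_one.mpr hle)
  obtain ⟨x, hx, hxM⟩ := SetLike.not_le_iff_exists.mp hnot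
  refine ⟨x, hx, fun g hg => ?_⟩
  set S := Subgroup.zpowers x ⊔ M with hS
  have hSN : S ≤ N := sup_le (Subgroup.zpowers_le.mpr hx) hMN
  have hmul := Subgroup.relIndex_mul_relIndex M S N le_sup_right hSN
  rw [h] at hmul
  have hxS : x ∈ S := (le_sup_left : _ ≤ S) (Subgroup.mem_zpowers x)
  have h1 : M.relIndex S ≠ 1 := fun h1 => hxM (Subgroup.relIndex_eq_one.mp h1 hxS)
  have h2 : S.relIndex N = 1 := by
    rcases (Nat.prime_mul_iff.mp (hmul ▸ hp.out)) with h | h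
    · exact h.2
    · exact absurd h.2 h1
  obtain ⟨y, ⟨i, rfl⟩, m, hm, hym⟩ :=
    Subgroup.mem_sup_of_normal_right.mp (Subgroup.relIndex_eq_one.mp h2 hg)
  exact ⟨i, m, hm, hym⟩

/-- Modulo `⁅M, N⁆`, the group `N` has a central subgroup with cyclic quotient, so it is abelian. -/
theorem commutator_self_le {p : ℕ} [hp : Fact p.Prime] {M N : Subgroup G} [M.Normal] [N.Normal]
    (hMN : M ≤ N) (h : M.relIndex N = p) : ⁅N, N⁆ ≤ ⁅M, N⁆ := by
  obtain ⟨x, hx, hgen⟩ := exists_generator hMN h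
  have hcomm : ∀ m ∈ M, ∀ g ∈ N, Commute (m : G ⧸ ⁅M, N⁆) (g : G ⧸ ⁅M, N⁆) := fun m hm g hg => by
    exact mem_iff_commute.mp (Subgroup.commutator_mem_commutator hm hg)
  rw [Subgroup.commutator_le]
  intro g hg h hh
  obtain ⟨i, m, hm, rfl⟩ := hgen g hg
  rw [mem_iff_commute, QuotientGroup.mk_mul]
  refine Commute.mul_left ?_ (hcomm m hm h hh)
  obtain ⟨j, n, hn, rfl⟩ := hgen h hh
  rw [QuotientGroup.mk_mul]
  refine Commute.mul_right ?_ (hcomm n hn _ (zpow_mem hx i)).symm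
  rw [QuotientGroup.mk_zpow, QuotientGroup.mk_zpow]
  exact Commute.zpow_zpow_self _ i j

/-! ### Commutation with a fixed element -/

/-- The map `n ↦ ⁅a, n⁆` from `N` to `G ⧸ D`. It is a homomorphism because its values commute,
modulo `D`, with the elements of `N`. -/
def commHom {N D : Subgroup G} [D.Normal] (a : G)
    (hc : ∀ n ∈ N, ∀ m ∈ N, ⁅m, ⁅a, n⁆⁆ ∈ D) : N →* G ⧸ D :=
  MonoidHom.mk' (fun n => ((⁅a, (n : G)⁆ : G) : G ⧸ D)) (fun n m => by
    have h1 : Commute ((n : G) : G ⧸ D) ((⁅a, (m : G)⁆ : G) : G ⧸ D) := by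
      exact mem_iff_commute.mp (hc m m.2 n n.2)
    rw [Subgroup.coe_mul, commutatorElement_mul_right_eq_mul_conj]
    simp only [QuotientGroup.mk_mul, QuotientGroup.mk_inv]
    rw [mul_assoc, mul_assoc, ← mul_assoc ((n : G) : G ⧸ D), h1.eq, mul_assoc, mul_inv_cancel,
      mul_one])


theorem commHom_apply {N D : Subgroup G} [D.Normal] (a : G)
    (hc : ∀ n ∈ N, ∀ m ∈ N, ⁅m, ⁅a, n⁆⁆ ∈ D) (n : N) :
    commHom a hc n = ((⁅a, (n : G)⁆ : G) : G ⧸ D) := rfl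

theorem commutatorElement_zpow_left {y n : G} (h : Commute y ⁅y, n⁆) (i : ℤ) :
    ⁅y ^ i, n⁆ = ⁅y, n⁆ ^ i := by
  have h1 : n * y * n⁻¹ = ⁅y, n⁆⁻¹ * y := by rw [commutatorElement_def]; group
  have h2 : n * y ^ i * n⁻¹ = (⁅y, n⁆ ^ i)⁻¹ * y ^ i := by
    rw [← conj_zpow, h1, (h.symm.inv_left).mul_zpow, inv_zpow]
  have h3 : ⁅y ^ i, n⁆ = y ^ i * (n * y ^ i * n⁻¹)⁻¹ := by rw [commutatorElement_def]; group
  rw [h3, h2]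
  group

/-- The elements of `N` centralizing `A` modulo `D` form a normal subgroup of index at most `p`
in `N`: if `a` generates `A` modulo `A₁`, they contain the kernel of `n ↦ ⁅a, n⁆`, which takes
values in `E / D`. -/
theorem exists_centralizing {p : ℕ} [hp : Fact p.Prime] {A A₁ D E N : Subgroup G} [A.Normal]
    [A₁.Normal] [D.Normal] [E.Normal] [N.Normal] (hA : A₁ ≤ A) (hAp : A₁.relIndex A = p)
    (hEp : D.relIndex E = p) (hAN : ⁅A, N⁆ ≤ E) (hA₁N : ⁅A₁, N⁆ ≤ D) (hEN : ⁅E, N⁆ ≤ D) :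
    ∃ C : Subgroup G, C.Normal ∧ C ≤ N ∧ ⁅A, C⁆ ≤ D ∧ C.relIndex N ∣ p := by
  obtain ⟨a, ha, hgen⟩ := exists_generator hA hAp
  set q := QuotientGroup.mk' D with hq
  have hqs : Function.Surjective q := QuotientGroup.mk'_surjective D
  have hAq : (A.map q).Normal := ‹A.Normal›.map q hqs
  have hCn : (Subgroup.centralizer (A.map q : Set (G ⧸ D))).Normal := inferInstance
  refine ⟨N ⊓ (Subgroup.centralizer (A.map q : Set (G ⧸ D))).comap q, ?_, inf_le_left, ?_, ?_⟩
  · have := hCn.comap q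
    infer_instance
  · rw [Subgroup.commutator_le]
    intro x hx c hc
    rw [mem_iff_commute]
    exact Subgroup.mem_centralizer_iff.mp (Subgroup.mem_comap.mp hc.2) _
      (Subgroup.mem_map_of_mem q hx)
  · have hc : ∀ n ∈ N, ∀ m ∈ N, ⁅m, ⁅a, n⁆⁆ ∈ D := fun n hn m hm => by
      rw [Subgroup.commutator_comm] at hEN
      exact hEN (Subgroup.commutator_mem_commutator hm
        (hAN (Subgroup.commutator_mem_commutator ha hn)))
    have hker : (commHom a hc).ker ≤
        (N ⊓ (Subgroup.centralizer (A.map q : Set (G ⧸ D))).comap q).subgroupOf N := by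
      intro n hn
      rw [MonoidHom.mem_ker, commHom_apply, QuotientGroup.eq_one_iff, mem_iff_commute] at hn
      refine Subgroup.mem_subgroupOf.mpr ⟨n.2, Subgroup.mem_comap.mpr ?_⟩
      rw [Subgroup.mem_centralizer_iff]
      rintro _ ⟨g, hg, rfl⟩
      obtain ⟨i, m, hm, rfl⟩ := hgen g hg
      have hmn := mem_iff_commute.mp (hA₁N (Subgroup.commutator_mem_commutator hm n.2))
      rw [map_mul, map_zpow]
      exact (hn.zpow_left i).mul_left hmn
    have hrange : (commHom a hc).range ≤ E.map q := by
      rintro _ ⟨n, rfl⟩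
      exact Subgroup.mem_map_of_mem q (hAN (Subgroup.commutator_mem_commutator ha n.2))
    have hcard : Nat.card (E.map q) = p := by
      rw [← Subgroup.relIndex_ker, hq, QuotientGroup.ker_mk', hEp]
    rw [← hcard]
    refine (Subgroup.index_dvd_of_le hker).trans ?_
    rw [Subgroup.index_ker]
    exact Subgroup.card_dvd_of_le hrange

/-! ### Subgroups of a given weight -/

/-- `N` has weight `w` if it centralizes every section `A / B` of order dividing `p ^ w`, where
`B ≤ A` are normal subgroups of `G`. In a `p`-group, the `w`-th term of the lower central series
(numbered from `1`) has this property. -/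
def Weight (p w : ℕ) (N : Subgroup G) : Prop :=
  ∀ A B : Subgroup G, A.Normal → B.Normal → B ≤ A → B.relIndex A ∣ p ^ w → ⁅A, N⁆ ≤ B

theorem Weight.mono {p v w : ℕ} {N : Subgroup G} (h : Weight p w N) (hvw : v ≤ w) :
    Weight p v N :=
  fun A B hA hB hBA hd => h A B hA hB hBA (hd.trans (pow_dvd_pow p hvw))

theorem weight_top {p : ℕ} [hp : Fact p.Prime] [Finite G] (hG : IsPGroup p G) :
    Weight p 1 (⊤ : Subgroup G) := by
  intro A B hA hB hBA hd
  by_cases hAB : A ≤ B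
  · exact Subgroup.commutator_le_left _ _ |>.trans hAB
  obtain ⟨C, hC, hBC, hCA, hp', hle⟩ := exists_normal_above hG hBA hAB
  have hmul := Subgroup.relIndex_mul_relIndex B C A hBC hCA
  have hAC : A ≤ C := by
    rw [← hmul, hp', pow_one] at hd
    rw [← Subgroup.relIndex_eq_one, ← Nat.dvd_one]
    exact Nat.dvd_of_mul_dvd_mul_left hp.out.pos (by rwa [mul_one])
  exact (Subgroup.commutator_mono hAC le_rfl).trans hle

/-- Hall's bound: `|N : ⁅N, N⁆| ≥ p ^ (w + 1)` for a non-abelian normal subgroup `N` of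
weight `w`. -/
theorem Weight.relIndex_commutator {p w : ℕ} [hp : Fact p.Prime] [Finite G] (hG : IsPGroup p G)
    {N : Subgroup G} [N.Normal] (h : Weight p w N) (hw : 1 ≤ w) (hN : ⁅N, N⁆ ≠ ⊥) {n : ℕ}
    (hn : ⁅N, N⁆.relIndex N = p ^ n) : w + 1 ≤ n := by
  by_contra! hlt
  have hN'N : ⁅N, N⁆ ≤ N := Subgroup.commutator_le_self N
  obtain ⟨m, hm⟩ := relIndex_eq_pow hG ⁅N, N⁆ ⊥
  have hm0 : m ≠ 0 := by
    rintro rfl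
    exact hN (le_bot_iff.mp (Subgroup.relIndex_eq_one.mp (by simpa using hm)))
  obtain ⟨m, rfl⟩ := Nat.exists_eq_succ_of_ne_zero hm0
  obtain ⟨L, hL, -, hLN', -, hLp⟩ := exists_normal_between hG (bot_le (a := ⁅N, N⁆)) m 1 hm
  rw [pow_one] at hLp
  have hnot : ¬ ⁅N, N⁆ ≤ L := fun hle => hp.out.ne_one (hLp ▸ Subgroup.relIndex_eq_one.mpr hle)
  rcases Nat.eq_zero_or_pos n with rfl | hpos
  -- the case `⁅N, N⁆ = N`
  · refine hnot (h N L inferInstance hL (hLN'.trans hN'N) ?_)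
    rw [← Subgroup.relIndex_mul_relIndex _ _ _ hLN' hN'N, hn, hLp, pow_zero, mul_one]
    exact dvd_pow_self p (by omega)
  -- otherwise take `⁅N, N⁆ ≤ M ≤ N` with `|N : M| = p`; then `|M : L| = |N : ⁅N, N⁆|`
  · obtain ⟨n, rfl⟩ := Nat.exists_eq_succ_of_ne_zero hpos.ne'
    obtain ⟨M, hM, hN'M, hMN, hMn, hMp⟩ := exists_normal_between hG hN'N n 1 hn
    rw [pow_one] at hMp
    refine hnot ((commutator_self_le hMN hMp).trans (h M L hM hL (hLN'.trans hN'M) ?_))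
    rw [← Subgroup.relIndex_mul_relIndex _ _ _ hLN' hN'M, hLp, hMn, ← pow_succ']
    exact pow_dvd_pow p (by omega)

/-- The derived subgroup has twice the weight. -/
theorem Weight.commutator {p w : ℕ} [hp : Fact p.Prime] [Finite G] (hG : IsPGroup p G)
    {N : Subgroup G} [N.Normal] (h : Weight p w N) : Weight p (2 * w) ⁅N, N⁆ := by
  intro A B hA hB hBA hd
  obtain ⟨n, hle, hn⟩ := (Nat.dvd_prime_pow hp.out).mp hd
  obtain ⟨C, hC, hBC, hCA, h1, h2⟩ :=
    exists_normal_between hG hBA (n / 2) (n - n / 2) (by rw [hn]; congr 1; omega)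
  have hAC : ⁅A, N⁆ ≤ C := h A C hA hC hCA (h2 ▸ pow_dvd_pow p (by omega))
  have hCB : ⁅C, N⁆ ≤ B := h C B hC hB hBC (h1 ▸ pow_dvd_pow p (by omega))
  have hAB : ⁅⁅A, N⁆, N⁆ ≤ B := (Subgroup.commutator_mono hAC le_rfl).trans hCB
  rw [Subgroup.commutator_comm]
  refine three_subgroups ?_ hAB
  rwa [Subgroup.commutator_comm N A]


/-- If `N` contains at most one normal subgroup of `G` of index `p`, then the weight of `⁅N, N⁆`
exceeds `2 * w` by one. For a section `A / B` of order `p ^ (2 * w + 1)`, this subgroup `L` (or `N`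
itself) centralizes two sections of order `p ^ (w + 1)`, one at the top of `A / B` and one at the
bottom, so the three subgroups lemma applies to `A`, `L` and `N`. -/
theorem Weight.commutator_of_unique {p w : ℕ} [hp : Fact p.Prime] [Finite G] (hG : IsPGroup p G)
    {N : Subgroup G} [N.Normal] (h : Weight p w N) (hw : 1 ≤ w)
    (huniq : ∀ L₁ L₂ : Subgroup G, L₁.Normal → L₂.Normal → L₁ ≤ N → L₂ ≤ N →
      L₁.relIndex N = p → L₂.relIndex N = p → L₁ = L₂) :
    Weight p (2 * w + 1) ⁅N, N⁆ := by
  intro A B hA hB hBA hd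
  obtain ⟨n, hle, hn⟩ := (Nat.dvd_prime_pow hp.out).mp hd
  rcases Nat.lt_or_ge n (2 * w + 1) with hlt | hge
  · exact h.commutator hG A B hA hB hBA (hn ▸ pow_dvd_pow p (by omega))
  obtain rfl : n = 2 * w + 1 := le_antisymm hle hge
  obtain ⟨v, rfl⟩ := Nat.exists_eq_add_of_le' hw
  -- a chain `B ≤ F ≤ D ≤ E ≤ A₁ ≤ A` with indices `p`, `p ^ v`, `p`, `p ^ v`, `p`
  obtain ⟨D, hD, hBD, hDA, hBDi, hDAi⟩ := exists_normal_between hG hBA (v + 1) (v + 1 + 1)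
    (by rw [hn]; congr 1; ring)
  obtain ⟨F, hF, hBF, hFD, hBFi, hFDi⟩ := exists_normal_between hG hBD 1 v
    (by rw [hBDi]; congr 1; ring)
  obtain ⟨E, hE, hDE, hEA, hDEi, hEAi⟩ := exists_normal_between hG hDA 1 (v + 1)
    (by rw [hDAi]; congr 1; ring)
  obtain ⟨A₁, hA₁, hEA₁, hA₁A, hEA₁i, hA₁Ai⟩ := exists_normal_between hG hEA v 1 hEAi
  rw [pow_one] at hBFi hDEi hA₁Ai
  have hAE : ⁅A, N⁆ ≤ E := h A E hA hE hEA (by rw [hEAi])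
  have hA₁D : ⁅A₁, N⁆ ≤ D := h A₁ D hA₁ hD (hDE.trans hEA₁) (by
    rw [← Subgroup.relIndex_mul_relIndex _ _ _ hDE hEA₁, hDEi, hEA₁i, ← pow_succ'])
  have hEF : ⁅E, N⁆ ≤ F := h E F hE hF (hFD.trans hDE) (by
    rw [← Subgroup.relIndex_mul_relIndex _ _ _ hFD hDE, hDEi, hFDi, ← pow_succ])
  have hDB : ⁅D, N⁆ ≤ B := h D B hD hB hBD (by rw [hBDi])
  have hED : ⁅E, N⁆ ≤ D := hEF.trans hFD
  have hFB : ⁅F, N⁆ ≤ B := (Subgroup.commutator_mono hFD le_rfl).trans hDB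
  obtain ⟨C₀, hC₀, hC₀N, hAC₀, hC₀i⟩ := exists_centralizing hA₁A hA₁Ai hDEi hAE hA₁D hED
  obtain ⟨C₁, hC₁, hC₁N, hEC₁, hC₁i⟩ := exists_centralizing hDE hDEi hBFi hEF hDB hFB
  -- by uniqueness of the subgroup of index `p`, `C₀` and `C₁` contain a common `L` of index
  -- dividing `p`
  obtain ⟨L, hL, hLN, hL₀, hL₁, hLi⟩ : ∃ L : Subgroup G, L.Normal ∧ L ≤ N ∧ L ≤ C₀ ∧ L ≤ C₁ ∧
      L.relIndex N ∣ p := by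
    rcases (Nat.dvd_prime hp.out).mp hC₀i with h0 | h0
    · exact ⟨C₁, hC₁, hC₁N, hC₁N.trans (Subgroup.relIndex_eq_one.mp h0), le_rfl, hC₁i⟩
    rcases (Nat.dvd_prime hp.out).mp hC₁i with h1 | h1
    · exact ⟨C₀, hC₀, hC₀N, le_rfl, hC₀N.trans (Subgroup.relIndex_eq_one.mp h1), hC₀i⟩
    obtain rfl := huniq C₀ C₁ hC₀ hC₁ hC₀N hC₁N h0 h1
    exact ⟨C₀, hC₀, hC₀N, le_rfl, le_rfl, hC₀i⟩
  have hNL : ⁅N, N⁆ ≤ ⁅L, N⁆ := by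
    rcases (Nat.dvd_prime hp.out).mp hLi with h1 | h1
    · exact Subgroup.commutator_mono (Subgroup.relIndex_eq_one.mp h1) le_rfl
    · exact commutator_self_le hLN h1
  refine (Subgroup.commutator_mono le_rfl hNL).trans ?_
  rw [Subgroup.commutator_comm]
  refine three_subgroups ?_ ?_
  · rw [Subgroup.commutator_comm N A]
    exact (Subgroup.commutator_mono hAE hL₁).trans hEC₁
  · exact (Subgroup.commutator_mono
      ((Subgroup.commutator_mono le_rfl hL₀).trans hAC₀) le_rfl).trans hDB

/-- If Hall's bound is attained for `N`, then `⁅N, N⁆` contains at most one normal subgroup of `G`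
of index `p`. -/
theorem Weight.unique_of_relIndex {p w : ℕ} [hp : Fact p.Prime] [Finite G] (hG : IsPGroup p G)
    {N : Subgroup G} [N.Normal] (h : Weight p w N) (hw : 1 ≤ w)
    (hi : ⁅N, N⁆.relIndex N = p ^ (w + 1)) {L₁ L₂ : Subgroup G} (hL₁ : L₁.Normal)
    (hL₂ : L₂.Normal) (hL₁N : L₁ ≤ ⁅N, N⁆) (hL₂N : L₂ ≤ ⁅N, N⁆) (h₁ : L₁.relIndex ⁅N, N⁆ = p)
    (h₂ : L₂.relIndex ⁅N, N⁆ = p) : L₁ = L₂ := by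
  have hN'N : ⁅N, N⁆ ≤ N := Subgroup.commutator_le_self N
  obtain ⟨v, rfl⟩ := Nat.exists_eq_add_of_le' hw
  obtain ⟨U, hU, hN'U, hUN, hN'Ui, hUNi⟩ := exists_normal_between hG hN'N (v + 1) 1 hi
  obtain ⟨R, hR, hN'R, hRU, hN'Ri, hRUi⟩ := exists_normal_between hG hN'U v 1 hN'Ui
  rw [pow_one] at hUNi hRUi
  -- `⁅N, N⁆ ≤ R ≤ U ≤ N` with indices `p ^ v`, `p`, `p`, where `v + 1` is the weight
  have hRL : ∀ L : Subgroup G, L.Normal → L ≤ ⁅N, N⁆ → L.relIndex ⁅N, N⁆ = p → ⁅R, N⁆ ≤ L :=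
    fun L hL hLN hLi => h R L hR hL (hLN.trans hN'R) (by
      rw [← Subgroup.relIndex_mul_relIndex _ _ _ hLN hN'R, hLi, hN'Ri, ← pow_succ'])
  set D := L₁ ⊓ L₂ with hDdef
  have hD : D.Normal := inferInstance
  have hRD : ⁅R, N⁆ ≤ D := le_inf (hRL L₁ hL₁ hL₁N h₁) (hRL L₂ hL₂ hL₂N h₂)
  have hDN' : D ≤ ⁅N, N⁆ := inf_le_left.trans hL₁N
  obtain ⟨y, hy, hgen⟩ := exists_generator hRU hRUi
  have hUU : ⁅U, U⁆ ≤ D :=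
    (commutator_self_le hRU hRUi).trans ((Subgroup.commutator_mono le_rfl hUN).trans hRD)
  have hyN : ∀ n ∈ N, ⁅y, n⁆ ∈ R := fun n hn =>
    hN'R (Subgroup.commutator_mem_commutator (hUN hy) hn)
  have hc : ∀ n ∈ N, ∀ m ∈ N, ⁅m, ⁅y, n⁆⁆ ∈ D := fun n hn m hm => by
    rw [Subgroup.commutator_comm] at hRD
    exact hRD (Subgroup.commutator_mem_commutator hm (hyN n hn))
  set f := commHom y hc with hf
  have hker : U.subgroupOf N ≤ f.ker := fun u hu => by
    rw [MonoidHom.mem_ker, hf, commHom_apply, QuotientGroup.eq_one_iff]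
    exact hUU (Subgroup.commutator_mem_commutator hy (Subgroup.mem_subgroupOf.mp hu))
  have hcard : Nat.card f.range ∣ p := by
    rw [← Subgroup.index_ker, ← hUNi]
    exact Subgroup.index_dvd_of_le hker
  -- `U` is generated by `y` and `R`, and `R` centralizes `N` modulo `D`, so `⁅U, N⁆` is contained
  -- in the image of `f`
  have hcomap : ⁅U, N⁆ ≤ f.range.comap (QuotientGroup.mk' D) := by
    rw [Subgroup.commutator_le]
    intro u hu n hn
    obtain ⟨i, r, hr, rfl⟩ := hgen u hu
    rw [Subgroup.mem_comap]
    have hrn : Commute (r : G ⧸ D) (n : G ⧸ D) :=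
      mem_iff_commute.mp (hRD (Subgroup.commutator_mem_commutator hr hn))
    have hyc : Commute (y : G ⧸ D) ((⁅y, n⁆ : G) : G ⧸ D) :=
      mem_iff_commute.mp (hc n hn y (hUN hy))
    have hmk : ∀ a b : G, ((⁅a, b⁆ : G) : G ⧸ D) = ⁅(a : G ⧸ D), (b : G ⧸ D)⁆ := fun a b => rfl
    have : QuotientGroup.mk' D ⁅y ^ i * r, n⁆ = f ⟨n, hn⟩ ^ i := by
      rw [hf, commHom_apply, QuotientGroup.mk'_apply, hmk, QuotientGroup.mk_mul,
        commutatorElement_mul_left_eq_conj_mul, hrn.commutator_eq, mul_one, mul_inv_cancel,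
        one_mul, QuotientGroup.mk_zpow, commutatorElement_zpow_left hyc, hmk]
    rw [this]
    exact Subgroup.zpow_mem _ (MonoidHom.mem_range.mpr ⟨_, rfl⟩) i
  have hDi : D.relIndex ⁅N, N⁆ ∣ p := by
    refine dvd_trans ?_ hcard
    have hle : ⁅N, N⁆ ≤ f.range.comap (QuotientGroup.mk' D) :=
      (commutator_self_le hUN hUNi).trans hcomap
    have hrel := Subgroup.relIndex_ker (K := f.range.comap (QuotientGroup.mk' D))
      (QuotientGroup.mk' D)
    rw [Subgroup.map_comap_eq_self_of_surjective (QuotientGroup.mk'_surjective D),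
      QuotientGroup.ker_mk'] at hrel
    rw [← hrel, ← Subgroup.relIndex_mul_relIndex _ _ _ hDN' hle]
    exact dvd_mul_right _ _
  have key : ∀ L : Subgroup G, D ≤ L → L ≤ ⁅N, N⁆ → L.relIndex ⁅N, N⁆ = p → L ≤ D := by
    intro L hDL hLN hLi
    rw [← Subgroup.relIndex_mul_relIndex _ _ _ hDL hLN, hLi] at hDi
    rw [← Subgroup.relIndex_eq_one, ← Nat.dvd_one]
    exact Nat.dvd_of_mul_dvd_mul_right hp.out.pos (by rwa [one_mul])
  exact le_antisymm ((key L₁ inf_le_left hL₁N h₁).trans inf_le_right)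
    ((key L₂ inf_le_right hL₂N h₂).trans inf_le_left)

/-! ### The derived series -/

theorem weight_derivedSeries {p : ℕ} [hp : Fact p.Prime] [Finite G] (hG : IsPGroup p G) (i : ℕ) :
    Weight p (2 ^ i) (derivedSeries G i) := by
  induction i with
  | zero => exact weight_top hG
  | succ i ih =>
    rw [derivedSeries_succ, pow_succ']
    exact ih.commutator hG

/-- If Hall's bound is attained at level `d` of the derived series, then all terms from level
`d + 2` onwards have larger weight than in general. -/
theorem weight_derivedSeries_succ {p : ℕ} [hp : Fact p.Prime] [Finite G] (hG : IsPGroup p G)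
    {d : ℕ} (hd : (derivedSeries G (d + 1)).relIndex (derivedSeries G d) = p ^ (2 ^ d + 1))
    (j : ℕ) : Weight p (2 ^ (d + 2 + j) + 1) (derivedSeries G (d + 2 + j)) := by
  induction j with
  | zero =>
    rw [add_zero, derivedSeries_succ, pow_succ']
    refine (weight_derivedSeries hG (d + 1)).commutator_of_unique hG Nat.one_le_two_pow ?_
    intro L₁ L₂ hL₁ hL₂ hL₁N hL₂N h₁ h₂
    rw [derivedSeries_succ] at hd hL₁N hL₂N h₁ h₂
    exact (weight_derivedSeries hG d).unique_of_relIndex hG Nat.one_le_two_pow hd hL₁ hL₂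
      hL₁N hL₂N h₁ h₂
  | succ j ih =>
    rw [← add_assoc, derivedSeries_succ]
    refine (ih.commutator hG).mono ?_
    rw [pow_succ']
    omega

theorem card_eq_pow_sum {p : ℕ} (n : ℕ → ℕ)
    (hn : ∀ i, (derivedSeries G (i + 1)).relIndex (derivedSeries G i) = p ^ n i) (k : ℕ) :
    (derivedSeries G k).index = p ^ ∑ i ∈ Finset.range k, n i := by
  induction k with
  | zero => simp
  | succ k ih =>
    rw [Finset.sum_range_succ, pow_add, ← ih, ← hn k, mul_comm,
      Subgroup.relIndex_mul_index (derivedSeries_antitone G k.le_succ)]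

/-- The numerical part: by `h2`, the indices `d < m` with `n d = 2 ^ d + 1` lie among two
consecutive numbers, and `2 ^ i + 2 ≤ n i` for the other `i < m`. -/
theorem sum_bound {m : ℕ} (n : ℕ → ℕ) (h1 : ∀ i < m, 2 ^ i + 1 ≤ n i)
    (h2 : ∀ d, n d = 2 ^ d + 1 → ∀ e < m, d + 2 ≤ e → 2 ^ e + 2 ≤ n e) :
    2 ^ m + 2 * m ≤ ∑ i ∈ Finset.range m, n i + 3 := by
  set E := (Finset.range m).filter (fun i => n i = 2 ^ i + 1) with hE
  have hcard : E.card ≤ 2 := by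
    rcases E.eq_empty_or_nonempty with h | h
    · simp [h]
    obtain ⟨d, hd, hmin⟩ := Finset.exists_min_image E id h
    have hsub : E ⊆ {d, d + 1} := fun e he => by
      have hde : d ≤ e := hmin e he
      rw [hE, Finset.mem_filter, Finset.mem_range] at hd he
      have := h2 d hd.2 e he.1
      simp only [Finset.mem_insert, Finset.mem_singleton]
      omega
    exact (Finset.card_le_card hsub).trans Finset.card_le_two
  have hsum : ∑ i ∈ Finset.range m, (2 ^ i + 2) ≤ ∑ i ∈ Finset.range m, n i + E.card := by
    rw [hE, Finset.card_filter, ← Finset.sum_add_distrib]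
    refine Finset.sum_le_sum fun i hi => ?_
    have := h1 i (Finset.mem_range.mp hi)
    split_ifs <;> omega
  rw [Finset.sum_add_distrib, Nat.geomSum_eq le_rfl] at hsum
  simp only [Finset.sum_const, Finset.card_range, smul_eq_mul] at hsum
  have := Nat.one_le_two_pow (n := m)
  omega

end DerivedLength

open DerivedLength in
/-- A finite `p`-group of derived length `k ≥ 4` has order at least
`p^(2^(k-1) + 2k - 4)`. -/
theorem stmt_14 (p : ℕ) (hp : p.Prime) (G : Type*) [Group G] [Finite G]
    (hG : IsPGroup p G) (k : ℕ) (hk : 4 ≤ k)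
    (h1 : derivedSeries G k = ⊥)
    (h2 : derivedSeries G (k - 1) ≠ ⊥) :
    p ^ (2 ^ (k - 1) + 2 * k - 4) ≤ Nat.card G := by
  have : Fact p.Prime := ⟨hp⟩
  obtain ⟨m, rfl⟩ : ∃ m, k = m + 1 := ⟨k - 1, by omega⟩
  rw [Nat.add_sub_cancel] at h2 ⊢
  choose n hn using fun i => relIndex_eq_pow hG (derivedSeries G i) (derivedSeries G (i + 1))
  have hne : ∀ i ≤ m, derivedSeries G i ≠ ⊥ := fun i hi h =>
    h2 (le_bot_iff.mp (h ▸ derivedSeries_antitone G hi))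
  have hlow : ∀ i < m, ∀ w, 1 ≤ w → Weight p w (derivedSeries G i) → w + 1 ≤ n i :=
    fun i hi w hw h => h.relIndex_commutator hG hw (hne (i + 1) hi) (hn i)
  have hsum : 2 ^ m + 2 * m ≤ ∑ i ∈ Finset.range m, n i + 3 := by
    refine sum_bound n (fun i hi => hlow i hi _ Nat.one_le_two_pow (weight_derivedSeries hG i)) ?_
    intro d hd e he hde
    obtain ⟨j, rfl⟩ := Nat.exists_eq_add_of_le hde
    exact hlow _ he _ (Nat.le_add_left _ _) (weight_derivedSeries_succ hG (hd ▸ hn d) j)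
  have hlast : n m ≠ 0 := fun h0 => by
    have := hn m
    rw [h0, pow_zero, Subgroup.relIndex_eq_one, h1] at this
    exact h2 (le_bot_iff.mp this)
  have hcard := card_eq_pow_sum n hn (m + 1)
  rw [h1, Subgroup.index_bot, Finset.sum_range_succ] at hcard
  rw [hcard]
  refine Nat.pow_le_pow_right hp.pos ?_
  omega
end
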